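/- Fix constants R*, ε, η, B > 0. There exists n₀ = n₀(ε, η, R*, B) such that for every n ≥ n₀ there exist a rate R ≤ R* + ε, an encoder f : ℝⁿ × 𝕊₊ⁿ × [0,1] → {1,…,⌊2^{nR}⌋}, and a decoder g : {1,…,⌊2^{nR}⌋} × [0,1] → ℝⁿ with the following property: if S is uniform on [0,1], then with probability at least 1 − exp(−n^B) over S, simultaneously for every positive semidefinite Σ ∈ ℝ^{n×n} with tr(Σ) = n, writing Ŵ(Σ) = g(f(W, Σ, S), S) for W ~ N(0, Iₙ) independent of S, one has (1/n) E_W[d_Σ(W, Ŵ(Σ))] ≤ 𝐃_rc(spec(Σ), R*) + η. -/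

import Mathlib

open MeasureTheory Matrix Real

/-- Standard Gaussian measure `N(0, I_n)` on `ℝⁿ`. -/
noncomputable def stdGaussian (n : ℕ) : Measure (Fin n → ℝ) :=
  Measure.pi fun _ => ProbabilityTheory.gaussianReal 0 1

/-- Distortion `d_Σ(w, v) = (w - v)ᵀ Σ (w - v)`. -/
noncomputable def dSig {n : ℕ} (Sig : Matrix (Fin n) (Fin n) ℝ) (w v : Fin n → ℝ) : ℝ :=
  (w - v) ⬝ᵥ Sig.mulVec (w - v)

/-- Random-coding distortion `D_rc(λ, T) = (1/n) Σᵢ λᵢ/(1 + λᵢ T)`. -/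
noncomputable def Drc {n : ℕ} (lam : Fin n → ℝ) (T : ℝ) : ℝ :=
  (1 / (n : ℝ)) * ∑ i, lam i / (1 + lam i * T)

/-- Random-coding rate `R_rc(λ, T) = (1/(2n)) Σᵢ log₂(1 + λᵢ T)`. -/
noncomputable def Rrc {n : ℕ} (lam : Fin n → ℝ) (T : ℝ) : ℝ :=
  (1 / (2 * (n : ℝ))) * ∑ i, Real.logb 2 (1 + lam i * T)

/-- `T_rc(λ, R)`: the unique `T > 0` with `R_rc(λ, T) = R`. -/
noncomputable def Trc {n : ℕ} (lam : Fin n → ℝ) (R : ℝ) : ℝ :=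
  Classical.epsilon fun T => 0 < T ∧ Rrc lam T = R

/-- `𝐃_rc(λ, R) = D_rc(λ, T_rc(λ, R))`. -/
noncomputable def DDrc {n : ℕ} (lam : Fin n → ℝ) (R : ℝ) : ℝ :=
  Drc lam (Trc lam R)

/-!
A random Gaussian codebook with codewords `C j`, each of which may be used at `K` scales `σ`, works
for all `Σ` at once. For `Σ = diag(λ)` and the Wiener gains `a = λ T / (1 + λ T)`, the test channel
`x = a w / σ + √(1 - a) z` with `σ² ≈ ∑ a² / ∑ a` attains the distortion `D_rc` and outputs words
`x` of about the energy of a codeword. A change of measure then shows that, off a set of source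
words of probability `O(1/n)` (Chebyshev), a codeword is acceptable with probability at least
`exp(-n (R log 2 + δ)) / 2`. With `2 ^ (n (R + ε / 2))` codewords the probability of missing a
coverable source word is doubly exponentially small, which beats a union bound over a net of
`exp(O(n⁴))` matrices; orthogonal invariance of the Gaussian reduces every matrix to the diagonal
case. Uncovered words are sent to the zero word, whose expected contribution is bounded by a fourth
moment. Hence a single deterministic codebook is good for every `Σ`, and no shared randomness is
needed.
-/

section

open ProbabilityTheory hiding stdGaussian

section Measure

variable {ι : Type*} [Fintype ι] {X : ι → Type*} [∀ i, MeasurableSpace (X i)]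
  {μ : ∀ i, Measure (X i)} [∀ i, IsProbabilityMeasure (μ i)]

lemma pi_withDensity_eq_withDensity_prod {ρ : ∀ i, X i → ENNReal} (hρ : ∀ i, Measurable (ρ i))
    [∀ i, SigmaFinite ((μ i).withDensity (ρ i))] :
    Measure.pi (fun i => (μ i).withDensity (ρ i)) =
      (Measure.pi μ).withDensity fun x => ∏ i, ρ i (x i) := by
  refine Measure.pi_eq fun s hs => ?_
  have hρs : ∀ i, Measurable ((s i).indicator (ρ i)) := fun i => (hρ i).indicator (hs i)
  have hindep : iIndepFun (fun i (x : ∀ i, X i) => (s i).indicator (ρ i) (x i)) (Measure.pi μ) :=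
    iIndepFun_pi fun i => (hρs i).aemeasurable
  have hindicator : (Set.univ.pi s).indicator (fun x => ∏ i, ρ i (x i)) =
      fun x => ∏ i, (s i).indicator (ρ i) (x i) := by
    classical
    ext x
    simp only [Set.indicator_apply, Set.mem_univ_pi, Finset.prod_ite_zero, Finset.mem_univ,
      true_imp_iff]
  rw [withDensity_apply _ (.univ_pi hs), ← lintegral_indicator (.univ_pi hs), hindicator,
    lintegral_prod_eq_prod_lintegral_of_indepFun _ _ hindep
      fun i => (hρs i).comp (measurable_pi_apply i)]
  refine Finset.prod_congr rfl fun i _ => ?_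
  rw [(measurePreserving_eval μ i).lintegral_comp (hρs i), withDensity_apply _ (hs i),
    lintegral_indicator (hs i)]

lemma measure_pi_sum_ge_le {Y : ∀ i, X i → ℝ} (hY : ∀ i, MemLp (Y i) 2 (μ i)) {m V δ : ℝ}
    (hm : ∑ i, ∫ x, Y i x ∂μ i ≤ m) (hV : ∑ i, Var[Y i; μ i] ≤ V) (hδ : 0 < δ) :
    Measure.pi μ {x | m + δ ≤ ∑ i, Y i (x i)} ≤ ENNReal.ofReal (V / δ ^ 2) := by
  have hY' : ∀ i, MemLp (fun x : ∀ i, X i => Y i (x i)) 2 (Measure.pi μ) := fun i =>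
    (hY i).comp_measurePreserving (measurePreserving_eval μ i)
  have hmean : ∫ x, ∑ i, Y i (x i) ∂Measure.pi μ ≤ m := by
    rw [integral_finsetSum _ fun i _ => (hY' i).integrable one_le_two]
    exact (Finset.sum_congr rfl fun i _ =>
      integral_comp_eval (hY i).aestronglyMeasurable).trans_le hm
  have hvar : Var[∑ i, fun x : ∀ i, X i => Y i (x i); Measure.pi μ] ≤ V :=
    (variance_sum_pi hY).trans_le hV
  refine (measure_mono fun x hx => ?_).trans
    ((meas_ge_le_variance_div_sq (memLp_finsetSum' _ fun i _ => hY' i) hδ).trans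
      (ENNReal.ofReal_le_ofReal (by gcongr)))
  simp only [Set.mem_ofPred_eq, Finset.sum_apply] at hx ⊢
  exact (by linarith : δ ≤ _).trans (le_abs_self _)

end Measure

section Covering

variable {X Y : Type*} [MeasurableSpace X] [MeasurableSpace Y]

lemma mul_measure_section_ge_le_prod {μ : Measure X} {ν : Measure Y} [SFinite ν] {S : Set (X × Y)}
    (hS : MeasurableSet S) (c : ENNReal) :
    c * μ {x | c ≤ ν (Prod.mk x ⁻¹' S)} ≤ μ.prod ν S := by
  rw [Measure.prod_apply hS]
  exact mul_meas_ge_le_lintegral (measurable_measure_prodMk_left hS) c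

/-- The points `x` whose section `{y | (x, y) ∈ S}` has `ν`-mass at least `p`: the source words that
a random codeword of law `ν` covers with probability at least `p`, where `S` is the set of
acceptable (source word, codeword) pairs. -/
def coverable (ν : Measure Y) (S : Set (X × Y)) (p : ℝ) : Set X :=
  {x | p ≤ ν.real (Prod.mk x ⁻¹' S)}

lemma measurableSet_coverable {ν : Measure Y} [SFinite ν] {S : Set (X × Y)} (hS : MeasurableSet S)
    (p : ℝ) : MeasurableSet (coverable ν S p) :=
  measurableSet_le measurable_const (measurable_measure_prodMk_left hS).ennreal_toReal

lemma coverable_preimage {ν : Measure Y} {S : Set (X × Y)} (hS : MeasurableSet S) (f : X → X)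
    {g : Y → Y} (hg : MeasurePreserving g ν ν) (p : ℝ) :
    coverable ν (Prod.map f g ⁻¹' S) p = f ⁻¹' coverable ν S p := by
  ext x
  have : Prod.mk x ⁻¹' (Prod.map f g ⁻¹' S) = g ⁻¹' (Prod.mk (f x) ⁻¹' S) := rfl
  rw [Set.mem_preimage, coverable, coverable, Set.mem_ofPred_eq, Set.mem_ofPred_eq, this,
    hg.measureReal_preimage (measurable_prodMk_left hS).nullMeasurableSet]

lemma pi_forall_notMem_section_le {ν : Measure Y} [IsProbabilityMeasure ν] {S : Set (X × Y)}
    (hS : MeasurableSet S) {p : ℝ} {x : X} (hx : x ∈ coverable ν S p) (M : ℕ) :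
    Measure.pi (fun _ : Fin M => ν) {C | ∀ j, (x, C j) ∉ S} ≤
      ENNReal.ofReal (Real.exp (-(M * p))) := by
  have hmiss : ν.real (Prod.mk x ⁻¹' S)ᶜ ≤ Real.exp (-p) := by
    rw [probReal_compl_eq_one_sub (measurable_prodMk_left hS)]
    have hp : p ≤ ν.real (Prod.mk x ⁻¹' S) := hx
    linarith [Real.add_one_le_exp (-p)]
  have hbox : {C : Fin M → Y | ∀ j, (x, C j) ∉ S} =
      Set.univ.pi fun _ => (Prod.mk x ⁻¹' S)ᶜ := by
    ext C; simp
  rw [hbox, Measure.pi_pi, Finset.prod_const, Finset.card_univ, Fintype.card_fin,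
    ← ofReal_measureReal, ← ENNReal.ofReal_pow measureReal_nonneg]
  refine ENNReal.ofReal_le_ofReal ((pow_le_pow_left₀ measureReal_nonneg hmiss M).trans_eq ?_)
  rw [← Real.exp_nat_mul, mul_neg]

lemma measurableSet_coverable_missed {ν : Measure Y} [SFinite ν] {S : Set (X × Y)}
    (hS : MeasurableSet S) (p : ℝ) (M : ℕ) :
    MeasurableSet {q : (Fin M → Y) × X | q.2 ∈ coverable ν S p ∧ ∀ j, (q.2, q.1 j) ∉ S} := by
  have hmiss : MeasurableSet {q : (Fin M → Y) × X | ∀ j, (q.2, q.1 j) ∉ S} := by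
    rw [Set.ofPred_forall]
    refine MeasurableSet.iInter fun j => ?_
    have hpair : Measurable fun q : (Fin M → Y) × X => (q.2, q.1 j) := by fun_prop
    exact hpair hS.compl
  exact (measurable_snd (measurableSet_coverable hS p)).inter hmiss

lemma lintegral_measure_coverable_missed_le (μ : Measure X) [IsProbabilityMeasure μ]
    (ν : Measure Y) [IsProbabilityMeasure ν] {S : Set (X × Y)} (hS : MeasurableSet S) (p : ℝ)
    (M : ℕ) :
    ∫⁻ C, μ {x | x ∈ coverable ν S p ∧ ∀ j, (x, C j) ∉ S} ∂Measure.pi (fun _ : Fin M => ν) ≤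
      ENNReal.ofReal (Real.exp (-(M * p))) := by
  have hE := measurableSet_coverable_missed (ν := ν) hS p M
  calc ∫⁻ C, μ {x | x ∈ coverable ν S p ∧ ∀ j, (x, C j) ∉ S} ∂Measure.pi (fun _ : Fin M => ν)
      = ∫⁻ x, Measure.pi (fun _ : Fin M => ν) {C | x ∈ coverable ν S p ∧ ∀ j, (x, C j) ∉ S} ∂μ :=
        (Measure.prod_apply hE).symm.trans (Measure.prod_apply_symm hE)
    _ ≤ ∫⁻ _, ENNReal.ofReal (Real.exp (-(M * p))) ∂μ := by
        refine lintegral_mono fun x => ?_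
        by_cases hx : x ∈ coverable ν S p
        · simpa only [hx, true_and] using pi_forall_notMem_section_le hS hx M
        · simp only [hx, false_and, Set.ofPred_false, measure_empty, zero_le]
    _ = ENNReal.ofReal (Real.exp (-(M * p))) := by simp

theorem exists_code_forall_measure_missed_le {ι : Type*} [Finite ι] (μ : Measure X)
    [IsProbabilityMeasure μ] (ν : Measure Y) [IsProbabilityMeasure ν] {S : ι → Set (X × Y)}
    (hS : ∀ i, MeasurableSet (S i)) (p : ℝ) (M : ℕ) :
    ∃ C : Fin M → Y, ∀ i, μ {x | x ∈ coverable ν (S i) p ∧ ∀ j, (x, C j) ∉ S i} ≤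
      ENNReal.ofReal (Nat.card ι * Real.exp (-(M * p))) := by
  cases nonempty_fintype ι
  let missed (i : ι) (C : Fin M → Y) : ENNReal :=
    μ {x | x ∈ coverable ν (S i) p ∧ ∀ j, (x, C j) ∉ S i}
  have hmeas : ∀ i, Measurable (missed i) := fun i =>
    measurable_measure_prodMk_left (measurableSet_coverable_missed (hS i) p M)
  have hexpect : ∫⁻ C, ∑ i, missed i C ∂Measure.pi (fun _ => ν) ≤
      ENNReal.ofReal (Nat.card ι * Real.exp (-(M * p))) := by
    rw [lintegral_finsetSum _ fun i _ => hmeas i]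
    refine (Finset.sum_le_sum fun i _ =>
      lintegral_measure_coverable_missed_le μ ν (hS i) p M).trans_eq ?_
    rw [Finset.sum_const, nsmul_eq_mul, Finset.card_univ, ← Nat.card_eq_fintype_card,
      ENNReal.ofReal_mul (Nat.cast_nonneg _), ENNReal.ofReal_natCast]
  obtain ⟨C, hC⟩ := exists_le_lintegral (μ := Measure.pi fun _ : Fin M => ν)
    (Finset.measurable_fun_sum Finset.univ fun i _ => hmeas i).aemeasurable
  exact ⟨C, fun i => (Finset.single_le_sum (f := fun i => missed i C)
    (fun _ _ => zero_le) (Finset.mem_univ i)).trans (hC.trans hexpect)⟩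

end Covering

lemma integral_le_of_le_off {Ω : Type*} [MeasurableSpace Ω] {μ : Measure Ω} [IsProbabilityMeasure μ]
    {m X : Ω → ℝ} {bad : Set Ω} {D c : ℝ} (hm : ∀ ω, 0 ≤ m ω) (hmX : ∀ ω, m ω ≤ X ω)
    (hX : MemLp X 2 μ) (hbad : MeasurableSet bad) (hD : 0 ≤ D) (hmD : ∀ ω ∉ bad, m ω ≤ D)
    (hc : 0 < c) :
    ∫ ω, m ω ∂μ ≤ D + c / 2 * μ.real bad + (∫ ω, X ω ^ 2 ∂μ) / (2 * c) := by
  have hbad_int : Integrable (bad.indicator fun _ => c / 2) μ := (integrable_const _).indicator hbad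
  have hsum_int : Integrable (fun ω => D + bad.indicator (fun _ => c / 2) ω) μ :=
    (integrable_const D).add hbad_int
  have hX_int : Integrable (fun ω => X ω ^ 2 / (2 * c)) μ := hX.integrable_sq.div_const _
  have hpointwise : ∀ ω, m ω ≤ D + bad.indicator (fun _ => c / 2) ω + X ω ^ 2 / (2 * c) := by
    intro ω
    by_cases hω : ω ∈ bad
    · have hamgm : X ω ≤ c / 2 + X ω ^ 2 / (2 * c) := by
        have : c / 2 + X ω ^ 2 / (2 * c) - X ω = (X ω - c) ^ 2 / (2 * c) := by field_simp; ring
        linarith [show 0 ≤ (X ω - c) ^ 2 / (2 * c) by positivity]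
      rw [Set.indicator_of_mem hω]
      linarith [hmX ω]
    · rw [Set.indicator_of_notMem hω]
      linarith [hmD ω hω, show 0 ≤ X ω ^ 2 / (2 * c) by positivity]
  calc ∫ ω, m ω ∂μ
      ≤ ∫ ω, (D + bad.indicator (fun _ => c / 2) ω + X ω ^ 2 / (2 * c)) ∂μ :=
        integral_mono_of_nonneg (.of_forall hm) (hsum_int.add hX_int) (.of_forall hpointwise)
    _ = D + c / 2 * μ.real bad + (∫ ω, X ω ^ 2 ∂μ) / (2 * c) := by
        rw [integral_add hsum_int hX_int, integral_add (integrable_const D) hbad_int,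
          integral_indicator_const _ hbad, integral_div, integral_const, probReal_univ,
          smul_eq_mul, smul_eq_mul, one_mul, mul_comm (c / 2)]

lemma exists_uniform_quantizer {α ι : Type*} {F : α → ι → ℝ} {b e : ℝ}
    (hF : ∀ x i, |F x i| ≤ b) (he : 0 < e) :
    ∃ q : α → ι → Fin (⌊2 * b / e⌋₊ + 1), ∀ x y, q x = q y → ∀ i, |F x i - F y i| ≤ e := by
  have hnonneg : ∀ x i, 0 ≤ (F x i + b) / e := fun x i =>
    div_nonneg (by linarith [(abs_le.1 (hF x i)).1]) he.le
  refine ⟨fun x i => ⟨⌊(F x i + b) / e⌋₊, Nat.lt_succ_of_le (Nat.floor_le_floor ?_)⟩,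
    fun x y hxy i => ?_⟩
  · gcongr
    linarith [(abs_le.1 (hF x i)).2]
  · have hfloor : ⌊(F x i + b) / e⌋₊ = ⌊(F y i + b) / e⌋₊ := congrArg Fin.val (congrFun hxy i)
    have hx := Nat.floor_le (hnonneg x i)
    have hx' := Nat.lt_floor_add_one ((F x i + b) / e)
    have hy := Nat.floor_le (hnonneg y i)
    have hy' := Nat.lt_floor_add_one ((F y i + b) / e)
    rw [hfloor] at hx hx'
    have hdiff : |(F x i + b) / e - (F y i + b) / e| ≤ 1 := abs_le.2 ⟨by linarith, by linarith⟩
    rwa [← sub_div, add_sub_add_right_eq_sub, abs_div, abs_of_pos he, div_le_one he] at hdiff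

lemma exists_almost_minimal_representative {α κ : Type*} (q : α → κ) {f : α → ℝ}
    (hf : BddBelow (Set.range f)) {δ : ℝ} (hδ : 0 < δ) :
    ∃ rep : Set.range q → α, ∀ x, q (rep (Set.rangeFactorization q x)) = q x ∧
      f (rep (Set.rangeFactorization q x)) ≤ f x + δ := by
  have hrep : ∀ k : Set.range q, ∃ y, q y = k ∧ ∀ x, q x = k → f y ≤ f x + δ := by
    rintro ⟨_, x, rfl⟩
    obtain ⟨_, ⟨y, hy, rfl⟩, hlt⟩ :=
      Real.lt_sInf_add_pos (s := f '' (q ⁻¹' {q x})) ⟨f x, x, rfl, rfl⟩ hδ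
    refine ⟨y, hy, fun x' hx' => hlt.le.trans ?_⟩
    gcongr
    exact csInf_le (hf.mono (Set.image_subset_range _ _)) ⟨x', hx', rfl⟩
  choose rep hrep hmin using hrep
  exact ⟨rep, fun x => ⟨hrep _, hmin _ x rfl⟩⟩

lemma dotProduct_mulVec_le_of_abs_sub_le {ι : Type*} [Fintype ι] {A B : Matrix ι ι ℝ} {e : ℝ}
    (h : ∀ i j, |A i j - B i j| ≤ e) (v : ι → ℝ) :
    v ⬝ᵥ A *ᵥ v ≤ v ⬝ᵥ B *ᵥ v + e * (Fintype.card ι * (v ⬝ᵥ v)) := by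
  have habs : v ⬝ᵥ (A - B) *ᵥ v ≤ e * (∑ i, |v i|) ^ 2 := by
    rw [sq, Finset.sum_mul_sum]
    simp only [dotProduct, mulVec, Finset.mul_sum, Matrix.sub_apply]
    refine Finset.sum_le_sum fun i _ => Finset.sum_le_sum fun j _ => ?_
    calc v i * ((A i j - B i j) * v j) ≤ |v i * ((A i j - B i j) * v j)| := le_abs_self _
      _ = |A i j - B i j| * (|v i| * |v j|) := by rw [abs_mul, abs_mul]; ring
      _ ≤ e * (|v i| * |v j|) := by gcongr; exact h i j
  rcases isEmpty_or_nonempty ι with hι | ⟨⟨i⟩⟩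
  · simp [dotProduct]
  have he : 0 ≤ e := (abs_nonneg _).trans (h i i)
  have hcs : (∑ i, |v i|) ^ 2 ≤ Fintype.card ι * (v ⬝ᵥ v) := by
    refine (sq_sum_le_card_mul_sum_sq (s := Finset.univ) (f := fun i => |v i|)).trans_eq ?_
    simp only [sq, abs_mul_abs_self, dotProduct, Finset.card_univ]
  rw [sub_mulVec, dotProduct_sub] at habs
  nlinarith [mul_le_mul_of_nonneg_left hcs he]

section ChangeOfMeasure

lemma measure_preimage_inter_le_exp_mul {X Y : Type*} [MeasurableSpace X] [MeasurableSpace Y]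
    {μ : Measure X} {ν : Measure Y} {T : X → Y} {ℓ : Y → ℝ} (hT : Measurable T)
    (hℓ : Measurable ℓ) (hmap : μ.map T = ν.withDensity fun y => ENNReal.ofReal (Real.exp (ℓ y)))
    {B : Set Y} (hB : MeasurableSet B) (r : ℝ) :
    μ {x | T x ∈ B ∧ ℓ (T x) ≤ r} ≤ ENNReal.ofReal (Real.exp r) * ν B := by
  have hS : MeasurableSet (B ∩ {y | ℓ y ≤ r}) := hB.inter (measurableSet_le hℓ measurable_const)
  calc μ {x | T x ∈ B ∧ ℓ (T x) ≤ r}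
      = ∫⁻ y in B ∩ {y | ℓ y ≤ r}, ENNReal.ofReal (Real.exp (ℓ y)) ∂ν := by
        rw [← withDensity_apply _ hS, ← hmap, Measure.map_apply hT hS]
        rfl
    _ ≤ ∫⁻ _ in B ∩ {y | ℓ y ≤ r}, ENNReal.ofReal (Real.exp r) ∂ν :=
        setLIntegral_mono measurable_const fun y hy =>
          ENNReal.ofReal_le_ofReal (Real.exp_le_exp.2 hy.2)
    _ ≤ ENNReal.ofReal (Real.exp r) * ν B := by
        rw [setLIntegral_const]
        gcongr
        exact Set.inter_subset_left

lemma gaussianReal_map_affine (b : ℝ) {c : ℝ} (hc : 0 < c) :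
    (gaussianReal 0 1).map (fun z => b + c * z) = (gaussianReal 0 1).withDensity fun x =>
      ENNReal.ofReal (Real.exp (x ^ 2 / 2 - ((x - b) / c) ^ 2 / 2 - Real.log c)) := by
  have hmap : (gaussianReal 0 1).map (fun z => b + c * z) =
      gaussianReal b (.mk (c ^ 2) (sq_nonneg c)) := by
    have h := gaussianReal_map_const_add (μ := c * 0) (v := .mk (c ^ 2) (sq_nonneg c) * 1) b
    rw [← gaussianReal_map_const_mul, Measure.map_map (by fun_prop) (by fun_prop)] at h
    simpa [Function.comp_def] using h
  have hvar : (.mk (c ^ 2) (sq_nonneg c) : NNReal) ≠ 0 := fun h =>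
    (pow_pos hc 2).ne' (congrArg NNReal.toReal h)
  rw [hmap, gaussianReal_of_var_ne_zero _ hvar, gaussianReal_of_var_ne_zero _ one_ne_zero,
    ← withDensity_mul _ (measurable_gaussianPDF _ _) (by fun_prop)]
  congr 1
  ext x
  rw [Pi.mul_apply, gaussianPDF, gaussianPDF, ← ENNReal.ofReal_mul (gaussianPDFReal_nonneg _ _ _)]
  congr 1
  simp only [gaussianPDFReal, NNReal.coe_mk, NNReal.coe_one]
  have hsqrt : √(2 * π * c ^ 2) = √(2 * π * 1) * c := by
    rw [mul_one, Real.sqrt_mul (by positivity), Real.sqrt_sq hc.le]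
  have hexponent : -(x - 0) ^ 2 / (2 * 1) + (x ^ 2 / 2 - ((x - b) / c) ^ 2 / 2) =
      -(x - b) ^ 2 / (2 * c ^ 2) := by
    field_simp
    ring
  rw [hsqrt, Real.exp_sub, Real.exp_log hc, ← hexponent, Real.exp_add]
  ring

instance isProbabilityMeasure_stdGaussian (n : ℕ) : IsProbabilityMeasure (stdGaussian n) := by
  unfold stdGaussian
  infer_instance

lemma stdGaussian_map_affine {n : ℕ} (b : Fin n → ℝ) {c : Fin n → ℝ} (hc : ∀ i, 0 < c i) :
    (stdGaussian n).map (fun z => b + c * z) = (stdGaussian n).withDensity fun x =>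
      ENNReal.ofReal (Real.exp
        (∑ i, (x i ^ 2 / 2 - ((x i - b i) / c i) ^ 2 / 2 - Real.log (c i)))) := by
  have hmap := fun i => gaussianReal_map_affine (b i) (hc i)
  have hprob : ∀ i, IsProbabilityMeasure ((gaussianReal 0 1).map fun z => b i + c i * z) :=
    fun i => Measure.isProbabilityMeasure_map (by fun_prop)
  have := fun i => hmap i ▸ hprob i
  have hpi := Measure.pi_map_pi (μ := fun _ : Fin n => gaussianReal 0 1)
    (f := fun i z => b i + c i * z) fun i => by fun_prop
  simp only [hmap] at hpi
  simp only [Real.exp_sum, ENNReal.ofReal_prod_of_nonneg fun _ _ => (Real.exp_pos _).le]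
  exact hpi.trans (pi_withDensity_eq_withDensity_prod fun i => by fun_prop)

lemma stdGaussian_affine_preimage_le {n : ℕ} (b : Fin n → ℝ) {c : Fin n → ℝ} (hc : ∀ i, 0 < c i)
    {B : Set (Fin n → ℝ)} (hB : MeasurableSet B) (r : ℝ) :
    stdGaussian n {z | b + c * z ∈ B ∧
        ∑ i, ((b i + c i * z i) ^ 2 / 2 - z i ^ 2 / 2 - Real.log (c i)) ≤ r} ≤
      ENNReal.ofReal (Real.exp r) * stdGaussian n B := by
  have hcancel : ∀ (z : Fin n → ℝ) i, (b i + c i * z i - b i) / c i = z i := fun z i => by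
    rw [add_sub_cancel_left, mul_div_cancel_left₀ _ (hc i).ne']
  have h := measure_preimage_inter_le_exp_mul (by fun_prop) (by fun_prop)
    (stdGaussian_map_affine b hc) hB r
  simpa only [Pi.add_apply, Pi.mul_apply, hcancel] using h

end ChangeOfMeasure

lemma measurePreserving_mulVec_stdGaussian {n : ℕ} {U : Matrix (Fin n) (Fin n) ℝ}
    (hU : U ∈ Matrix.orthogonalGroup (Fin n) ℝ) :
    MeasurePreserving (U *ᵥ ·) (stdGaussian n) (stdGaussian n) := by
  let L := Unitary.linearIsometryEquiv
    ⟨toEuclideanCLM (𝕜 := ℝ) U, Unitary.map_mem toEuclideanCLM hU⟩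
  have hL : (stdGaussian n).map (L ∘ WithLp.toLp 2) = (stdGaussian n).map (WithLp.toLp 2) := by
    rw [← Measure.map_map (by fun_prop) (by fun_prop)]
    simp only [stdGaussian, map_pi_eq_stdGaussian, stdGaussian_map]
  refine ⟨by fun_prop, ?_⟩
  have h := congrArg (Measure.map WithLp.ofLp) hL
  rw [Measure.map_map (by fun_prop) (by fun_prop), Measure.map_map (by fun_prop) (by fun_prop)] at h
  exact h.trans Measure.map_id

section GaussianMoments

/-- The fourth moment of the standard normal law (equal to `3`). Only its finiteness matters. -/
noncomputable def gaussianFourthMoment : ℝ := ∫ x, x ^ 4 ∂gaussianReal 0 1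

lemma gaussianFourthMoment_nonneg : 0 ≤ gaussianFourthMoment :=
  integral_nonneg fun x => by positivity

lemma integrable_pow_gaussianReal (k : ℕ) : Integrable (fun x : ℝ => x ^ k) (gaussianReal 0 1) := by
  have h : MemLp (id : ℝ → ℝ) k (gaussianReal 0 1) := by
    simpa using memLp_id_gaussianReal (μ := 0) (v := 1) (k : NNReal)
  refine (integrable_norm_iff (by fun_prop)).1 (h.integrable_norm_pow'.congr ?_)
  exact .of_forall fun x => (norm_pow x k).symm

lemma integral_sq_gaussianReal : ∫ x : ℝ, x ^ 2 ∂gaussianReal 0 1 = 1 := by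
  have h := variance_id_gaussianReal (μ := 0) (v := 1)
  rwa [variance_of_integral_eq_zero (by fun_prop) (by simp)] at h

lemma integrable_pow_mul_pow_gaussianReal_prod (k l : ℕ) :
    Integrable (fun p : ℝ × ℝ => p.1 ^ k * p.2 ^ l) ((gaussianReal 0 1).prod (gaussianReal 0 1)) :=
  (integrable_pow_gaussianReal k).mul_prod (integrable_pow_gaussianReal l)

/-- The binary quadratic form `α x² + β x y + κ y²`, evaluated at the pair `(x, y)`. -/
def binaryForm (α β κ : ℝ) (p : ℝ × ℝ) : ℝ := α * p.1 ^ 2 + β * (p.1 * p.2) + κ * p.2 ^ 2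

lemma measurable_binaryForm (α β κ : ℝ) : Measurable (binaryForm α β κ) := by
  unfold binaryForm; fun_prop

lemma integrable_pow_combination_gaussianReal_prod (a b c : ℝ) (i j k l r s : ℕ) :
    Integrable (fun p : ℝ × ℝ => a * (p.1 ^ i * p.2 ^ j) + b * (p.1 ^ k * p.2 ^ l) +
      c * (p.1 ^ r * p.2 ^ s)) ((gaussianReal 0 1).prod (gaussianReal 0 1)) :=
  (((integrable_pow_mul_pow_gaussianReal_prod i j).const_mul a).add
    ((integrable_pow_mul_pow_gaussianReal_prod k l).const_mul b)).add
      ((integrable_pow_mul_pow_gaussianReal_prod r s).const_mul c)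

lemma integral_pow_combination_gaussianReal_prod (a b c : ℝ) (i j k l r s : ℕ) :
    ∫ p : ℝ × ℝ, (a * (p.1 ^ i * p.2 ^ j) + b * (p.1 ^ k * p.2 ^ l) + c * (p.1 ^ r * p.2 ^ s))
        ∂(gaussianReal 0 1).prod (gaussianReal 0 1) =
      a * ((∫ x, x ^ i ∂gaussianReal 0 1) * ∫ x, x ^ j ∂gaussianReal 0 1) +
      b * ((∫ x, x ^ k ∂gaussianReal 0 1) * ∫ x, x ^ l ∂gaussianReal 0 1) +
      c * ((∫ x, x ^ r ∂gaussianReal 0 1) * ∫ x, x ^ s ∂gaussianReal 0 1) := by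
  have hij := (integrable_pow_mul_pow_gaussianReal_prod i j).const_mul a
  have hkl := (integrable_pow_mul_pow_gaussianReal_prod k l).const_mul b
  have hrs := (integrable_pow_mul_pow_gaussianReal_prod r s).const_mul c
  have hmoment : ∀ k l : ℕ, ∫ p : ℝ × ℝ, p.1 ^ k * p.2 ^ l
      ∂(gaussianReal 0 1).prod (gaussianReal 0 1) =
        (∫ x : ℝ, x ^ k ∂gaussianReal 0 1) * ∫ x : ℝ, x ^ l ∂gaussianReal 0 1 := fun k l =>
    integral_prod_mul (fun x : ℝ => x ^ k) fun x : ℝ => x ^ l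
  rw [integral_add (f := fun p : ℝ × ℝ => a * (p.1 ^ i * p.2 ^ j) + b * (p.1 ^ k * p.2 ^ l))
    (hij.add hkl) hrs, integral_add hij hkl]
  simp only [integral_const_mul, hmoment]

lemma binaryForm_eq (α β κ : ℝ) : binaryForm α β κ = fun p =>
    α * (p.1 ^ 2 * p.2 ^ 0) + β * (p.1 ^ 1 * p.2 ^ 1) + κ * (p.1 ^ 0 * p.2 ^ 2) := by
  ext p
  simp only [binaryForm, pow_zero, pow_one, mul_one, one_mul]

lemma integral_binaryForm (α β κ : ℝ) :
    ∫ p, binaryForm α β κ p ∂(gaussianReal 0 1).prod (gaussianReal 0 1) = α + κ := by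
  rw [binaryForm_eq, integral_pow_combination_gaussianReal_prod]
  simp [integral_sq_gaussianReal]

lemma sq_binaryForm_le (α β κ : ℝ) (p : ℝ × ℝ) :
    binaryForm α β κ p ^ 2 ≤ 3 * (α ^ 2 * (p.1 ^ 4 * p.2 ^ 0) + β ^ 2 * (p.1 ^ 2 * p.2 ^ 2) +
      κ ^ 2 * (p.1 ^ 0 * p.2 ^ 4)) := by
  unfold binaryForm
  nlinarith [sq_nonneg (α * p.1 ^ 2 - β * (p.1 * p.2)), sq_nonneg (α * p.1 ^ 2 - κ * p.2 ^ 2),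
    sq_nonneg (β * (p.1 * p.2) - κ * p.2 ^ 2)]

lemma memLp_two_binaryForm (α β κ : ℝ) :
    MemLp (binaryForm α β κ) 2 ((gaussianReal 0 1).prod (gaussianReal 0 1)) := by
  have hmeas := measurable_binaryForm α β κ
  rw [memLp_two_iff_integrable_sq hmeas.aestronglyMeasurable]
  refine ((integrable_pow_combination_gaussianReal_prod (α ^ 2) (β ^ 2) (κ ^ 2)
    4 0 2 2 0 4).const_mul 3).mono' (hmeas.pow_const 2).aestronglyMeasurable
      (.of_forall fun p => ?_)
  rw [Real.norm_of_nonneg (sq_nonneg _)]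
  exact sq_binaryForm_le α β κ p

lemma variance_binaryForm_le (α β κ : ℝ) :
    Var[binaryForm α β κ; (gaussianReal 0 1).prod (gaussianReal 0 1)] ≤
      3 * (gaussianFourthMoment + 1) * (α ^ 2 + β ^ 2 + κ ^ 2) := by
  have hm4 := gaussianFourthMoment_nonneg
  calc Var[binaryForm α β κ; (gaussianReal 0 1).prod (gaussianReal 0 1)]
      ≤ ∫ p, binaryForm α β κ p ^ 2 ∂(gaussianReal 0 1).prod (gaussianReal 0 1) :=
        variance_le_expectation_sq (measurable_binaryForm α β κ).aestronglyMeasurable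
    _ ≤ ∫ p : ℝ × ℝ, 3 * (α ^ 2 * (p.1 ^ 4 * p.2 ^ 0) + β ^ 2 * (p.1 ^ 2 * p.2 ^ 2) +
          κ ^ 2 * (p.1 ^ 0 * p.2 ^ 4)) ∂(gaussianReal 0 1).prod (gaussianReal 0 1) :=
        integral_mono (memLp_two_binaryForm α β κ).integrable_sq
          ((integrable_pow_combination_gaussianReal_prod _ _ _ 4 0 2 2 0 4).const_mul 3)
          (sq_binaryForm_le α β κ)
    _ = 3 * (α ^ 2 * gaussianFourthMoment + β ^ 2 + κ ^ 2 * gaussianFourthMoment) := by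
        rw [integral_const_mul, integral_pow_combination_gaussianReal_prod]
        simp [integral_sq_gaussianReal, gaussianFourthMoment]
    _ ≤ 3 * (gaussianFourthMoment + 1) * (α ^ 2 + β ^ 2 + κ ^ 2) := by
        nlinarith [mul_nonneg hm4 (sq_nonneg β), sq_nonneg α, sq_nonneg κ]

lemma stdGaussian_prod_sum_binaryForm_ge_le {n : ℕ} {α β κ : Fin n → ℝ} {m V δ : ℝ}
    (hm : ∑ i, (α i + κ i) ≤ m)
    (hV : 3 * (gaussianFourthMoment + 1) * ∑ i, (α i ^ 2 + β i ^ 2 + κ i ^ 2) ≤ V) (hδ : 0 < δ) :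
    (stdGaussian n).prod (stdGaussian n)
        {p | m + δ ≤ ∑ i, binaryForm (α i) (β i) (κ i) (p.1 i, p.2 i)} ≤
      ENNReal.ofReal (V / δ ^ 2) := by
  have hmeas : MeasurableSet {p : (Fin n → ℝ) × (Fin n → ℝ) |
      m + δ ≤ ∑ i, binaryForm (α i) (β i) (κ i) (p.1 i, p.2 i)} :=
    measurableSet_le measurable_const (by unfold binaryForm; fun_prop)
  rw [stdGaussian, ← (measurePreserving_arrowProdEquivProdArrow ℝ ℝ (Fin n)
    (fun _ => gaussianReal 0 1) fun _ => gaussianReal 0 1).measure_preimage hmeas.nullMeasurableSet]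
  refine measure_pi_sum_ge_le (Y := fun i => binaryForm (α i) (β i) (κ i))
    (fun i => memLp_two_binaryForm _ _ _) ?_ ?_ hδ
  · simpa only [integral_binaryForm] using hm
  · refine (Finset.sum_le_sum fun i _ => variance_binaryForm_le _ _ _).trans ?_
    rwa [← Finset.mul_sum]

end GaussianMoments

section TestChannel

/-- The Wiener test channel with gains `a`: the source word `w` is sent to `a w / σ` plus Gaussian
noise of variance `1 - a`, so that `σ` times the output estimates `w`. -/
noncomputable def testChannel {n : ℕ} (a : Fin n → ℝ) (σ : ℝ) (w z : Fin n → ℝ) : Fin n → ℝ :=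
  fun i => a i * w i / σ + √(1 - a i) * z i

/-- The pairs of a source word `w` and a codeword `x` for which the reconstruction `σ x` has
distortion at most `D` and squared Euclidean error at most `3 n`. The second condition makes the
distortion stable under perturbation of `Sig`. -/
def goodPairs {n : ℕ} (Sig : Matrix (Fin n) (Fin n) ℝ) (σ D : ℝ) :
    Set ((Fin n → ℝ) × (Fin n → ℝ)) :=
  {p | dSig Sig p.1 (σ • p.2) ≤ n * D ∧ dSig 1 p.1 (σ • p.2) ≤ 3 * n}

lemma measurable_dSig_smul {n : ℕ} (Sig : Matrix (Fin n) (Fin n) ℝ) (σ : ℝ) :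
    Measurable fun p : (Fin n → ℝ) × (Fin n → ℝ) => dSig Sig p.1 (σ • p.2) := by
  unfold dSig dotProduct Matrix.mulVec dotProduct
  fun_prop

lemma measurableSet_goodPairs {n : ℕ} (Sig : Matrix (Fin n) (Fin n) ℝ) (σ D : ℝ) :
    MeasurableSet (goodPairs Sig σ D) :=
  (measurableSet_le (measurable_dSig_smul Sig σ) measurable_const).inter
    (measurableSet_le (measurable_dSig_smul 1 σ) measurable_const)

lemma dSig_diagonal {n : ℕ} (b w v : Fin n → ℝ) :
    dSig (diagonal b) w v = ∑ i, b i * (w i - v i) ^ 2 := by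
  simp only [dSig, dotProduct, mulVec_diagonal, Pi.sub_apply]
  exact Finset.sum_congr rfl fun i _ => by ring

variable {n : ℕ} {a : Fin n → ℝ} {σ : ℝ}

lemma measurable_testChannel (a : Fin n → ℝ) (σ : ℝ) :
    Measurable fun p : (Fin n → ℝ) × (Fin n → ℝ) => testChannel a σ p.1 p.2 := by
  unfold testChannel
  fun_prop

lemma dSig_diagonal_testChannel (b : Fin n → ℝ) (ha : ∀ i, a i ≤ 1) (hσ : 0 < σ)
    (w z : Fin n → ℝ) :
    dSig (diagonal b) w (σ • testChannel a σ w z) =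
      ∑ i, binaryForm (b i * (1 - a i) ^ 2) (-2 * (b i * (1 - a i)) * (σ * √(1 - a i)))
        (b i * (1 - a i) * σ ^ 2) (w i, z i) := by
  rw [dSig_diagonal]
  refine Finset.sum_congr rfl fun i _ => ?_
  have hc : √(1 - a i) ^ 2 = 1 - a i := Real.sq_sqrt (sub_nonneg.2 (ha i))
  have herr : w i - (σ • testChannel a σ w z) i = (1 - a i) * w i - σ * √(1 - a i) * z i := by
    simp only [testChannel, Pi.smul_apply, smul_eq_mul]
    field_simp
    ring
  rw [herr, binaryForm]
  linear_combination b i * σ ^ 2 * z i ^ 2 * hc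

lemma stdGaussian_prod_dSig_testChannel_ge_le {b : Fin n → ℝ} {β m δ : ℝ}
    (ha0 : ∀ i, 0 ≤ a i) (ha1 : ∀ i, a i ≤ 1) (hσ0 : 0 < σ) (hσ1 : σ ≤ 1)
    (hb : ∀ i, 0 ≤ b i) (hbβ : ∀ i, b i * (1 - a i) ≤ β)
    (hm : ∑ i, b i * (1 - a i) * (1 - a i + σ ^ 2) ≤ m) (hδ : 0 < δ) :
    (stdGaussian n).prod (stdGaussian n)
        {p | m + δ ≤ dSig (diagonal b) p.1 (σ • testChannel a σ p.1 p.2)} ≤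
      ENNReal.ofReal (n * (18 * (gaussianFourthMoment + 1) * β ^ 2) / δ ^ 2) := by
  simp only [dSig_diagonal_testChannel b ha1 hσ0]
  refine stdGaussian_prod_sum_binaryForm_ge_le
    ((Finset.sum_le_sum fun i _ => le_of_eq (by ring)).trans hm) ?_ hδ
  have hcoeff : ∀ i, (b i * (1 - a i) ^ 2) ^ 2 +
      (-2 * (b i * (1 - a i)) * (σ * √(1 - a i))) ^ 2 + (b i * (1 - a i) * σ ^ 2) ^ 2 ≤
      6 * β ^ 2 := fun i => by
    have ht0 : 0 ≤ 1 - a i := sub_nonneg.2 (ha1 i)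
    have ht1 : 1 - a i ≤ 1 := by linarith [ha0 i]
    have hσ2 : σ ^ 2 ≤ 1 := pow_le_one₀ hσ0.le hσ1
    have hfactor : (1 - a i) ^ 2 + 4 * (σ ^ 2 * (1 - a i)) + (σ ^ 2) ^ 2 ≤ 6 := by
      linarith [pow_le_one₀ (n := 2) ht0 ht1, pow_le_one₀ (n := 2) (sq_nonneg σ) hσ2,
        mul_le_one₀ hσ2 ht0 ht1]
    calc _ = (b i * (1 - a i)) ^ 2 *
          ((1 - a i) ^ 2 + 4 * (σ ^ 2 * (1 - a i)) + (σ ^ 2) ^ 2) := by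
          linear_combination 4 * (b i * (1 - a i)) ^ 2 * σ ^ 2 * Real.sq_sqrt ht0
      _ ≤ β ^ 2 * 6 := by
          have := mul_nonneg (hb i) ht0
          gcongr
          exact hbβ i
      _ = 6 * β ^ 2 := mul_comm _ _
  have := gaussianFourthMoment_nonneg
  calc _ ≤ 3 * (gaussianFourthMoment + 1) * ∑ _i : Fin n, 6 * β ^ 2 := by
        gcongr with i
        exact hcoeff i
    _ = n * (18 * (gaussianFourthMoment + 1) * β ^ 2) := by
        simp only [Finset.sum_const, Finset.card_univ, Fintype.card_fin, nsmul_eq_mul]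
        ring

lemma sum_sq_le_card_mul_pow_four (ha0 : ∀ i, 0 ≤ a i)
    (hσ : ∑ i, a i ^ 2 ≤ σ ^ 2 * ∑ i, a i) : ∑ i, a i ^ 2 ≤ n * σ ^ 4 := by
  have hCS : (∑ i, a i) ^ 2 ≤ n * ∑ i, a i ^ 2 := by
    simpa using sq_sum_le_card_mul_sum_sq (s := Finset.univ) (f := a)
  have h2 : 0 ≤ ∑ i, a i ^ 2 := Finset.sum_nonneg fun i _ => sq_nonneg _
  rcases h2.eq_or_lt with h | h
  · rw [← h]
    positivity
  · refine le_of_mul_le_mul_right ?_ h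
    have hsum : 0 ≤ ∑ i, a i := Finset.sum_nonneg fun i _ => ha0 i
    calc (∑ i, a i ^ 2) * ∑ i, a i ^ 2 ≤ (σ ^ 2 * ∑ i, a i) * (σ ^ 2 * ∑ i, a i) := by gcongr
      _ = σ ^ 4 * (∑ i, a i) ^ 2 := by ring
      _ ≤ σ ^ 4 * (n * ∑ i, a i ^ 2) := by gcongr
      _ = n * σ ^ 4 * ∑ i, a i ^ 2 := by ring

lemma sum_sq_energy_gain_coeff_le {x σ : ℝ} (hx0 : 0 ≤ x) (hx1 : x ≤ 1) :
    (x ^ 2 / σ ^ 2 / 2) ^ 2 + (x * √(1 - x) / σ) ^ 2 + (-x / 2) ^ 2 ≤ 1 + x ^ 2 / σ ^ 4 := by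
  have hcross : (x * √(1 - x) / σ) ^ 2 = x ^ 2 / σ ^ 2 * (1 - x) := by
    rw [div_pow, mul_pow, Real.sq_sqrt (sub_nonneg.2 hx1)]
    ring
  have hfour : (x ^ 2 / σ ^ 2) ^ 2 ≤ x ^ 2 / σ ^ 4 := by
    rw [div_pow, show σ ^ 4 = (σ ^ 2) ^ 2 by ring]
    gcongr
    exact pow_le_of_le_one hx0 hx1 two_ne_zero
  have hu : 0 ≤ x ^ 2 / σ ^ 2 * x := mul_nonneg (by positivity) hx0
  rw [hcross]
  nlinarith [sq_nonneg (x ^ 2 / σ ^ 2 - 1), pow_le_one₀ (n := 2) hx0 hx1]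

lemma stdGaussian_prod_energy_gain_ge_le {δ : ℝ} (ha0 : ∀ i, 0 ≤ a i) (ha1 : ∀ i, a i ≤ 1)
    (hσ0 : 0 < σ) (hσ : ∑ i, a i ^ 2 ≤ σ ^ 2 * ∑ i, a i) (hδ : 0 < δ) :
    (stdGaussian n).prod (stdGaussian n)
        {p | δ ≤ ∑ i, (testChannel a σ p.1 p.2 i ^ 2 / 2 - p.2 i ^ 2 / 2)} ≤
      ENNReal.ofReal (n * (6 * (gaussianFourthMoment + 1)) / δ ^ 2) := by
  have hform : ∀ p : (Fin n → ℝ) × (Fin n → ℝ),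
      ∑ i, (testChannel a σ p.1 p.2 i ^ 2 / 2 - p.2 i ^ 2 / 2) =
        ∑ i, binaryForm (a i ^ 2 / σ ^ 2 / 2) (a i * √(1 - a i) / σ) (-a i / 2)
          (p.1 i, p.2 i) := fun p => Finset.sum_congr rfl fun i _ => by
    have hc : √(1 - a i) ^ 2 = 1 - a i := Real.sq_sqrt (sub_nonneg.2 (ha1 i))
    simp only [testChannel, binaryForm]
    linear_combination p.2 i ^ 2 / 2 * hc
  have hmean : ∑ i, (a i ^ 2 / σ ^ 2 / 2 + -a i / 2) ≤ 0 := by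
    rw [Finset.sum_add_distrib, ← Finset.sum_div, ← Finset.sum_div, ← Finset.sum_div,
      Finset.sum_neg_distrib]
    have := (div_le_iff₀' (by positivity)).2 hσ
    linarith
  simp only [hform]
  rw [← zero_add δ]
  refine (stdGaussian_prod_sum_binaryForm_ge_le hmean ?_ hδ).trans_eq (by rw [zero_add])
  have := gaussianFourthMoment_nonneg
  calc _ ≤ 3 * (gaussianFourthMoment + 1) * ∑ i, (1 + a i ^ 2 / σ ^ 4) := by
        gcongr 3 * _ * ∑ i, ?_ with i
        exact sum_sq_energy_gain_coeff_le (ha0 i) (ha1 i)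
    _ ≤ 3 * (gaussianFourthMoment + 1) * (n + n) := by
        have := (div_le_iff₀ (by positivity)).2 (sum_sq_le_card_mul_pow_four ha0 hσ)
        rw [Finset.sum_add_distrib, ← Finset.sum_div]
        simp only [Finset.sum_const, Finset.card_univ, Fintype.card_fin, nsmul_eq_mul, mul_one]
        gcongr
    _ = n * (6 * (gaussianFourthMoment + 1)) := by ring

/-- The constant in the `O(1/n)` bound on the probability that a Gaussian source word is not
covered; `δ` is the excess distortion and rate, `β` bounds `λᵢ (1 - aᵢ)`. -/
noncomputable def coverConst (β δ : ℝ) : ℝ :=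
  2 * (3 * (gaussianFourthMoment + 1)) * (6 * β ^ 2 / δ ^ 2 + 6 + 2 / δ ^ 2)

lemma coverConst_nonneg (β δ : ℝ) : 0 ≤ coverConst β δ := by
  have := gaussianFourthMoment_nonneg
  unfold coverConst
  positivity

/-- The pairs of a source word and a noise realisation for which the test channel misbehaves: the
distortion, the squared error, or the log-likelihood ratio of the output against the codeword law is
too large. -/
def atypical (lam a : Fin n → ℝ) (σ D δ : ℝ) : Set ((Fin n → ℝ) × (Fin n → ℝ)) :=
  {p | n * D ≤ dSig (diagonal lam) p.1 (σ • testChannel a σ p.1 p.2)} ∪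
    {p | 3 * n ≤ dSig 1 p.1 (σ • testChannel a σ p.1 p.2)} ∪
    {p | n * δ ≤ ∑ i, (testChannel a σ p.1 p.2 i ^ 2 / 2 - p.2 i ^ 2 / 2)}

lemma measurableSet_atypical (lam a : Fin n → ℝ) (σ D δ : ℝ) :
    MeasurableSet (atypical lam a σ D δ) := by
  have hx := measurable_testChannel a σ
  have hd (Sig : Matrix (Fin n) (Fin n) ℝ) := (measurable_dSig_smul Sig σ).comp
    (measurable_fst.prodMk hx)
  refine ((measurableSet_le measurable_const (hd _)).union
    (measurableSet_le measurable_const (hd _))).union (measurableSet_le measurable_const ?_)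
  fun_prop

lemma stdGaussian_prod_atypical_le {lam : Fin n → ℝ} {β D δ : ℝ} (hn : 0 < n)
    (ha0 : ∀ i, 0 ≤ a i) (ha1 : ∀ i, a i ≤ 1) (hσ0 : 0 < σ) (hσ1 : σ ≤ 1)
    (hlam : ∀ i, 0 ≤ lam i) (hβ : ∀ i, lam i * (1 - a i) ≤ β)
    (hσ : ∑ i, a i ^ 2 ≤ σ ^ 2 * ∑ i, a i) (hδ : 0 < δ)
    (hD : ∑ i, lam i * (1 - a i) * (1 - a i + σ ^ 2) + n * δ ≤ n * D) :
    (stdGaussian n).prod (stdGaussian n) (atypical lam a σ D δ) ≤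
      ENNReal.ofReal (coverConst β δ / 2 / n) := by
  have hn' : (0 : ℝ) < n := by exact_mod_cast hn
  have := gaussianFourthMoment_nonneg
  have hdist := stdGaussian_prod_dSig_testChannel_ge_le (m := n * D - n * δ) (δ := n * δ)
    ha0 ha1 hσ0 hσ1 hlam hβ (by linarith) (by positivity)
  have hmean : ∑ i, (1 : Fin n → ℝ) i * (1 - a i) * (1 - a i + σ ^ 2) ≤ 2 * (n : ℝ) := by
    calc _ ≤ ∑ _i : Fin n, (1 * 1 * (1 + 1) : ℝ) := by
          have : σ ^ 2 ≤ 1 := pow_le_one₀ hσ0.le hσ1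
          simp only [Pi.one_apply]
          gcongr with i
          · linarith [ha1 i, sq_nonneg σ]
          · exact sub_le_self 1 (ha0 i)
          · exact sub_le_self 1 (ha0 i)
      _ = 2 * n := by norm_num [mul_comm]
  have herr := stdGaussian_prod_dSig_testChannel_ge_le (b := 1) (β := 1) (δ := n)
    ha0 ha1 hσ0 hσ1 (fun _ => zero_le_one) (fun i => by simp [ha0 i]) hmean hn'
  have henergy := stdGaussian_prod_energy_gain_ge_le (δ := n * δ) ha0 ha1 hσ0 hσ (by positivity)
  rw [sub_add_cancel] at hdist
  rw [Pi.one_def, diagonal_one, show (2 * n + n : ℝ) = 3 * n by ring] at herr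
  refine (measure_union_le _ _).trans ((add_le_add ((measure_union_le _ _).trans
    (add_le_add hdist herr)) henergy).trans_eq ?_)
  rw [← ENNReal.ofReal_add (by positivity) (by positivity),
    ← ENNReal.ofReal_add (by positivity) (by positivity), coverConst]
  congr 1
  field_simp
  ring

lemma half_le_measure_atypical_of_notMem_coverable {lam : Fin n → ℝ} {D δ : ℝ} (ha1 : ∀ i, a i < 1)
    {w : Fin n → ℝ}
    (hw : w ∉ coverable (stdGaussian n) (goodPairs (diagonal lam) σ D)
      (Real.exp (-(∑ i, -Real.log √(1 - a i) + n * δ)) / 2)) :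
    1 / 2 ≤ stdGaussian n (Prod.mk w ⁻¹' atypical lam a σ D δ) := by
  set r := ∑ i, -Real.log √(1 - a i) + n * δ with hr
  have hmeas := measurableSet_goodPairs (diagonal lam) σ D
  have htypical : (Prod.mk w ⁻¹' atypical lam a σ D δ)ᶜ ⊆
      {z | testChannel a σ w z ∈ Prod.mk w ⁻¹' goodPairs (diagonal lam) σ D ∧
        ∑ i, ((testChannel a σ w z i) ^ 2 / 2 - z i ^ 2 / 2 - Real.log √(1 - a i)) ≤ r} := by
    intro z hz
    simp only [atypical, Set.preimage_union, Set.preimage_ofPred_eq, Set.mem_compl_iff,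
      Set.mem_union, Set.mem_ofPred_eq, not_or, not_le] at hz
    refine ⟨⟨hz.1.1.le, hz.1.2.le⟩, ?_⟩
    rw [Finset.sum_sub_distrib, hr, Finset.sum_neg_distrib]
    linarith [hz.2]
  have hshift := (measure_mono htypical).trans (stdGaussian_affine_preimage_le
    (fun i => a i * w i / σ) (fun i => Real.sqrt_pos.2 (sub_pos.2 (ha1 i)))
    (measurable_prodMk_left hmeas) r)
  have hsmall : (stdGaussian n).real (Prod.mk w ⁻¹' goodPairs (diagonal lam) σ D) <
      Real.exp (-r) / 2 := not_le.1 hw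
  have hhalf : (stdGaussian n).real (Prod.mk w ⁻¹' atypical lam a σ D δ)ᶜ ≤ 1 / 2 := by
    have hreal := ENNReal.toReal_mono (by finiteness) hshift
    rw [ENNReal.toReal_mul, ENNReal.toReal_ofReal (Real.exp_nonneg r)] at hreal
    calc _ ≤ Real.exp r * (Real.exp (-r) / 2) := hreal.trans (by gcongr; exact hsmall.le)
      _ = 1 / 2 := by rw [← mul_div_assoc, ← Real.exp_add, add_neg_cancel, Real.exp_zero]
  rw [probReal_compl_eq_one_sub
    (measurable_prodMk_left (measurableSet_atypical lam a σ D δ))] at hhalf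
  rw [← ENNReal.toReal_le_toReal (by finiteness) (by finiteness)]
  simp only [ENNReal.toReal_div, ENNReal.toReal_one, ENNReal.toReal_ofNat]
  rw [← Measure.real]
  linarith

lemma stdGaussian_compl_coverable_goodPairs_le {lam : Fin n → ℝ} {β D δ : ℝ} (hn : 0 < n)
    (ha0 : ∀ i, 0 ≤ a i) (ha1 : ∀ i, a i < 1) (hσ0 : 0 < σ) (hσ1 : σ ≤ 1)
    (hlam : ∀ i, 0 ≤ lam i) (hβ : ∀ i, lam i * (1 - a i) ≤ β)
    (hσ : ∑ i, a i ^ 2 ≤ σ ^ 2 * ∑ i, a i) (hδ : 0 < δ)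
    (hD : ∑ i, lam i * (1 - a i) * (1 - a i + σ ^ 2) + n * δ ≤ n * D) :
    stdGaussian n (coverable (stdGaussian n) (goodPairs (diagonal lam) σ D)
        (Real.exp (-(∑ i, -Real.log √(1 - a i) + n * δ)) / 2))ᶜ ≤
      ENNReal.ofReal (coverConst β δ / n) := by
  have hmarkov := (mul_measure_section_ge_le_prod
    (measurableSet_atypical lam a σ D δ) (1 / 2)).trans
    (stdGaussian_prod_atypical_le hn ha0 (fun i => (ha1 i).le) hσ0 hσ1 hlam hβ hσ hδ hD)
  refine (measure_mono fun w hw => half_le_measure_atypical_of_notMem_coverable ha1 hw).trans ?_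
  rw [one_div, ENNReal.inv_mul_le_iff (by norm_num) (by norm_num)] at hmarkov
  rw [one_div]
  refine hmarkov.trans_eq ?_
  rw [← ENNReal.ofReal_ofNat 2, ← ENNReal.ofReal_mul zero_le_two]
  congr 1
  ring

end TestChannel

section RateDistortion

variable {n : ℕ} {lam : Fin n → ℝ} {R T : ℝ}

lemma sum_logb_eq (hn : 0 < n) (lam : Fin n → ℝ) (T : ℝ) :
    ∑ i, Real.logb 2 (1 + lam i * T) = 2 * n * Rrc lam T := by
  rw [Rrc, ← mul_assoc, mul_one_div_cancel (by positivity), one_mul]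

lemma exists_le_Rrc (hlam : ∀ i, 0 ≤ lam i) {i : Fin n} (hi : 0 < lam i) (R : ℝ) :
    ∃ T, 0 ≤ T ∧ R ≤ Rrc lam T := by
  have hn : 0 < n := i.pos
  set T : ℝ := (2 : ℝ) ^ (2 * n * R) / lam i with hT
  have hT0 : 0 ≤ T := by positivity
  have hlogi : 2 * n * R ≤ Real.logb 2 (1 + lam i * T) := by
    rw [Real.le_logb_iff_rpow_le one_lt_two (by positivity), hT, mul_div_cancel₀ _ hi.ne']
    exact le_add_of_nonneg_left zero_le_one
  have hlog : ∀ j, 0 ≤ Real.logb 2 (1 + lam j * T) := fun j =>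
    Real.logb_nonneg one_lt_two (le_add_of_nonneg_right (mul_nonneg (hlam j) hT0))
  refine ⟨T, hT0, le_of_mul_le_mul_left ?_ (by positivity : (0 : ℝ) < 2 * n)⟩
  rw [← sum_logb_eq hn]
  exact hlogi.trans (Finset.single_le_sum (f := fun j => Real.logb 2 (1 + lam j * T))
    (fun j _ => hlog j) (Finset.mem_univ i))

lemma Trc_spec (hlam : ∀ i, 0 ≤ lam i) (hpos : ∃ i, 0 < lam i) (hR : 0 < R) :
    0 < Trc lam R ∧ Rrc lam (Trc lam R) = R := by
  apply Classical.epsilon_spec (p := fun T => 0 < T ∧ Rrc lam T = R)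
  obtain ⟨i, hi⟩ := hpos
  obtain ⟨T₁, hT₁, hRT₁⟩ := exists_le_Rrc hlam hi R
  have hcont : ContinuousOn (Rrc lam) (Set.Icc 0 T₁) := by
    unfold Rrc Real.logb
    refine continuousOn_const.mul (continuousOn_finsetSum _ fun j _ =>
      (ContinuousOn.log (by fun_prop) fun T hT => ?_).div_const _)
    have := mul_nonneg (hlam j) hT.1
    positivity
  have hzero : Rrc lam 0 = 0 := by simp [Rrc]
  obtain ⟨T, hT, hRT⟩ := intermediate_value_Icc hT₁ hcont ⟨hzero.trans_le hR.le, hRT₁⟩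
  refine ⟨T, hT.1.lt_of_ne ?_, hRT⟩
  rintro rfl
  exact hR.ne (hzero.symm.trans hRT)

lemma two_mul_Rrc_mul_log_two_le (hn : 0 < n) (hlam : ∀ i, 0 ≤ lam i) (hsum : ∑ i, lam i = n)
    (hT : 0 ≤ T) : 2 * Rrc lam T * Real.log 2 ≤ T := by
  have hlog : ∀ i, Real.logb 2 (1 + lam i * T) * Real.log 2 ≤ lam i * T := fun i => by
    have hx : 0 < 1 + lam i * T := by linarith [mul_nonneg (hlam i) hT]
    rw [Real.logb, div_mul_cancel₀ _ (Real.log_pos one_lt_two).ne']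
    linarith [Real.log_le_sub_one_of_pos hx]
  refine le_of_mul_le_mul_left ?_ (Nat.cast_pos.2 hn : (0 : ℝ) < n)
  calc n * (2 * Rrc lam T * Real.log 2) = ∑ i, Real.logb 2 (1 + lam i * T) * Real.log 2 := by
        rw [← Finset.sum_mul, sum_logb_eq hn]
        ring
    _ ≤ ∑ i, lam i * T := Finset.sum_le_sum fun i _ => hlog i
    _ = n * T := by rw [← Finset.sum_mul, hsum]

lemma Drc_nonneg (hlam : ∀ i, 0 ≤ lam i) (hT : 0 ≤ T) : 0 ≤ Drc lam T :=
  mul_nonneg (by positivity) (Finset.sum_nonneg fun i _ =>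
    div_nonneg (hlam i) (by linarith [mul_nonneg (hlam i) hT]))

/-- The Wiener gains `λᵢ T / (1 + λᵢ T)` of the test channel achieving `Drc lam T` at rate
`Rrc lam T`. -/
noncomputable def wienerGain (lam : Fin n → ℝ) (T : ℝ) (i : Fin n) : ℝ :=
  lam i * T / (1 + lam i * T)

lemma one_sub_wienerGain (hlam : ∀ i, 0 ≤ lam i) (hT : 0 ≤ T) (i : Fin n) :
    1 - wienerGain lam T i = (1 + lam i * T)⁻¹ := by
  have : 0 < 1 + lam i * T := by linarith [mul_nonneg (hlam i) hT]
  rw [wienerGain]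
  field_simp
  ring

lemma wienerGain_nonneg (hlam : ∀ i, 0 ≤ lam i) (hT : 0 ≤ T) (i : Fin n) :
    0 ≤ wienerGain lam T i := by
  have := mul_nonneg (hlam i) hT
  unfold wienerGain
  positivity

lemma wienerGain_lt_one (hlam : ∀ i, 0 ≤ lam i) (hT : 0 ≤ T) (i : Fin n) :
    wienerGain lam T i < 1 := by
  have := mul_nonneg (hlam i) hT
  rw [← sub_pos, one_sub_wienerGain hlam hT]
  positivity

lemma mul_one_sub_wienerGain (hlam : ∀ i, 0 ≤ lam i) (hT : 0 < T) (i : Fin n) :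
    lam i * (1 - wienerGain lam T i) = wienerGain lam T i / T := by
  rw [one_sub_wienerGain hlam hT.le, wienerGain]
  field_simp

lemma sum_wienerGain_div (hn : 0 < n) (hT : 0 < T) :
    ∑ i, wienerGain lam T i / T = n * Drc lam T := by
  rw [Drc, ← mul_assoc, mul_one_div_cancel (by positivity), one_mul]
  refine Finset.sum_congr rfl fun i _ => ?_
  rw [wienerGain]
  field_simp

lemma sum_mul_one_sub_wienerGain_le (hn : 0 < n) (hlam : ∀ i, 0 ≤ lam i) (hT : 0 < T) {s e : ℝ}
    (hs : s * ∑ i, wienerGain lam T i ≤ ∑ i, wienerGain lam T i ^ 2 + n * e) :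
    ∑ i, lam i * (1 - wienerGain lam T i) * (1 - wienerGain lam T i + s) ≤
      n * (Drc lam T + e / T) := by
  calc ∑ i, lam i * (1 - wienerGain lam T i) * (1 - wienerGain lam T i + s)
      = ∑ i, wienerGain lam T i / T +
          (s * ∑ i, wienerGain lam T i - ∑ i, wienerGain lam T i ^ 2) / T := by
        rw [Finset.mul_sum, ← Finset.sum_sub_distrib, Finset.sum_div, ← Finset.sum_add_distrib]
        refine Finset.sum_congr rfl fun i _ => ?_
        rw [mul_one_sub_wienerGain hlam hT]
        ring
    _ ≤ n * Drc lam T + n * e / T := by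
        rw [sum_wienerGain_div hn hT]
        gcongr
        linarith
    _ = n * (Drc lam T + e / T) := by ring

lemma sum_neg_log_sqrt_one_sub_wienerGain (hn : 0 < n) (hlam : ∀ i, 0 ≤ lam i) (hT : 0 ≤ T) :
    ∑ i, -Real.log √(1 - wienerGain lam T i) = n * (Rrc lam T * Real.log 2) := by
  have hlog : ∀ i, -Real.log √(1 - wienerGain lam T i) =
      Real.logb 2 (1 + lam i * T) * (Real.log 2 / 2) := fun i => by
    rw [Real.log_sqrt (sub_nonneg.2 (wienerGain_lt_one hlam hT i).le),
      one_sub_wienerGain hlam hT, Real.log_inv, Real.logb]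
    field_simp
  rw [Finset.sum_congr rfl fun i _ => hlog i, ← Finset.sum_mul, sum_logb_eq hn]
  ring

/-- The `k`-th of `K` reconstruction scales; their squares are the grid `1/K, 2/K, …, 1`. -/
noncomputable def gridScale (K : ℕ) (k : Fin K) : ℝ := √((k + 1) / K)

lemma gridScale_pos {K : ℕ} (k : Fin K) : 0 < gridScale K k := by
  have := k.pos
  exact Real.sqrt_pos.2 (by positivity)

lemma gridScale_le_one {K : ℕ} (k : Fin K) : gridScale K k ≤ 1 := by
  have := k.pos
  refine Real.sqrt_le_one.2 ((div_le_one (by positivity)).2 ?_)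
  exact_mod_cast k.isLt

lemma exists_gridScale_sq_mem_Icc {K : ℕ} (hK : 0 < K) {s : ℝ} (hs0 : 0 < s) (hs1 : s ≤ 1) :
    ∃ k : Fin K, gridScale K k ^ 2 ∈ Set.Icc s (s + 1 / K) := by
  have hK' : (0 : ℝ) < K := by exact_mod_cast hK
  obtain ⟨m, hm⟩ := Nat.exists_eq_succ_of_ne_zero (Nat.ceil_pos.2 (mul_pos hs0 hK')).ne'
  have hmK : m < K := by
    rw [← Nat.succ_le_iff, ← hm]
    exact Nat.ceil_le.2 (mul_le_of_le_one_left hK'.le hs1)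
  have hceil : ((m : ℝ) + 1) = ⌈s * K⌉₊ := by
    rw [hm]
    push_cast
    rfl
  refine ⟨⟨m, hmK⟩, ?_⟩
  rw [gridScale, Real.sq_sqrt (by positivity), hceil, Set.mem_Icc, le_div_iff₀ hK',
    div_le_iff₀ hK', add_mul, one_div_mul_cancel hK'.ne']
  exact ⟨Nat.le_ceil _, (Nat.ceil_lt_add_one (by positivity)).le⟩

lemma exists_gridScale_sq_mul_sum_mem_Icc {K : ℕ} (hK : 0 < K) {a : Fin n → ℝ}
    (ha0 : ∀ i, 0 ≤ a i) (ha1 : ∀ i, a i ≤ 1) (hpos : ∃ i, 0 < a i) :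
    ∃ k : Fin K,
      gridScale K k ^ 2 * ∑ i, a i ∈ Set.Icc (∑ i, a i ^ 2) (∑ i, a i ^ 2 + n * (1 / K)) := by
  obtain ⟨i, hi⟩ := hpos
  have hsum : 0 < ∑ i, a i :=
    Finset.sum_pos' (fun i _ => ha0 i) ⟨i, Finset.mem_univ i, hi⟩
  have hsum_sq : 0 < ∑ i, a i ^ 2 :=
    Finset.sum_pos' (fun i _ => sq_nonneg _) ⟨i, Finset.mem_univ i, pow_pos hi 2⟩
  have hle : ∑ i, a i ^ 2 ≤ ∑ i, a i :=
    Finset.sum_le_sum fun i _ => pow_le_of_le_one (ha0 i) (ha1 i) two_ne_zero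
  have hcard : ∑ i, a i ≤ n := by
    simpa using Finset.sum_le_sum (s := Finset.univ) fun i _ => ha1 i
  obtain ⟨k, hk⟩ := exists_gridScale_sq_mem_Icc hK (div_pos hsum_sq hsum)
    ((div_le_one hsum).2 hle)
  refine ⟨k, (div_le_iff₀ hsum).1 hk.1, ?_⟩
  calc gridScale K k ^ 2 * ∑ i, a i
      ≤ ((∑ i, a i ^ 2) / (∑ i, a i) + 1 / K) * ∑ i, a i := by gcongr; exact hk.2
    _ = ∑ i, a i ^ 2 + (∑ i, a i) * (1 / K) := by
        rw [add_mul, div_mul_cancel₀ _ hsum.ne', mul_comm (1 / (K : ℝ))]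
    _ ≤ ∑ i, a i ^ 2 + n * (1 / K) := by gcongr

lemma exists_eigenvalue_pos (hn : 0 < n) (hsum : ∑ i, lam i = n) : ∃ i, 0 < lam i := by
  obtain ⟨i, -, hi⟩ := Finset.exists_lt_of_sum_lt (s := Finset.univ) (f := fun _ : Fin n => (0 : ℝ))
    (g := lam) (by simpa [hsum] using hn)
  exact ⟨i, hi⟩

lemma DDrc_nonneg (hn : 0 < n) (hlam : ∀ i, 0 ≤ lam i) (hsum : ∑ i, lam i = n) (hR : 0 < R) :
    0 ≤ DDrc lam R :=
  Drc_nonneg hlam (Trc_spec hlam (exists_eigenvalue_pos hn hsum) hR).1.le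

lemma exists_gridScale_compl_coverable_diagonal_le (hn : 0 < n) (hlam : ∀ i, 0 ≤ lam i)
    (hsum : ∑ i, lam i = n) (hR : 0 < R) {K : ℕ} (hK : 0 < K) {δ : ℝ} (hδ : 0 < δ)
    (hKδ : 1 / (K * (2 * R * Real.log 2)) ≤ δ) :
    ∃ k : Fin K, stdGaussian n (coverable (stdGaussian n)
        (goodPairs (diagonal lam) (gridScale K k) (DDrc lam R + 2 * δ))
        (Real.exp (-(n * (R * Real.log 2 + δ))) / 2))ᶜ ≤
      ENNReal.ofReal (coverConst (1 / (2 * R * Real.log 2)) δ / n) := by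
  obtain ⟨i, hi⟩ := exists_eigenvalue_pos hn hsum
  obtain ⟨hT, hRT⟩ := Trc_spec hlam ⟨i, hi⟩ hR
  rw [DDrc]
  set T := Trc lam R
  have hTlow : 2 * R * Real.log 2 ≤ T := hRT ▸ two_mul_Rrc_mul_log_two_le hn hlam hsum hT.le
  have ha0 := wienerGain_nonneg hlam hT.le
  have ha1 := wienerGain_lt_one hlam hT.le
  have hgain := mul_one_sub_wienerGain hlam hT
  obtain ⟨k, hk⟩ := exists_gridScale_sq_mul_sum_mem_Icc hK ha0 (fun i => (ha1 i).le)
    ⟨i, by rw [wienerGain]; positivity⟩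
  have hmean : ∑ i, lam i * (1 - wienerGain lam T i) *
      (1 - wienerGain lam T i + gridScale K k ^ 2) + n * δ ≤ n * (Drc lam T + 2 * δ) := by
    have hexcess : 1 / K / T ≤ δ := by
      rw [div_div]
      exact le_trans (by gcongr) hKδ
    calc _ ≤ n * (Drc lam T + 1 / K / T) + n * δ := by
          gcongr
          exact sum_mul_one_sub_wienerGain_le hn hlam hT hk.2
      _ ≤ n * (Drc lam T + δ) + n * δ := by gcongr
      _ = n * (Drc lam T + 2 * δ) := by ring
  refine ⟨k, ?_⟩
  rw [mul_add, ← hRT, ← sum_neg_log_sqrt_one_sub_wienerGain hn hlam hT.le, hRT]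
  refine stdGaussian_compl_coverable_goodPairs_le hn ha0 ha1 (gridScale_pos k)
    (gridScale_le_one k) hlam (fun i => ?_) hk.1 hδ hmean
  rw [hgain]
  gcongr
  exact (ha1 i).le

end RateDistortion

lemma dSig_mul_mul_transpose {n : ℕ} (U A : Matrix (Fin n) (Fin n) ℝ) (w v : Fin n → ℝ) :
    dSig (U * A * Uᵀ) w v = dSig A (Uᵀ *ᵥ w) (Uᵀ *ᵥ v) := by
  rw [dSig, dSig, ← mulVec_sub, ← mulVec_mulVec, ← mulVec_mulVec, dotProduct_mulVec,
    ← mulVec_transpose]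

/-- An orthonormal eigenbasis and nonnegative eigenvalues with sum `n`: the data of a positive
semidefinite matrix of trace `n` together with a spectral decomposition. -/
structure SpectralData (n : ℕ) where
  U : Matrix (Fin n) (Fin n) ℝ
  lam : Fin n → ℝ
  mem_orthogonalGroup : U ∈ Matrix.orthogonalGroup (Fin n) ℝ
  lam_nonneg : ∀ i, 0 ≤ lam i
  sum_lam : ∑ i, lam i = n

namespace SpectralData

variable {n : ℕ} (Λ : SpectralData n)

/-- The matrix `U diag(lam) Uᵀ` with the given spectral decomposition. -/
def cov : Matrix (Fin n) (Fin n) ℝ := Λ.U * diagonal Λ.lam * Λ.Uᵀ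

lemma exists_of_posSemidef {Sig U : Matrix (Fin n) (Fin n) ℝ} {lam : Fin n → ℝ}
    (hSig : Sig.PosSemidef) (htr : Sig.trace = n) (hU : U * Uᵀ = 1)
    (hdecomp : Sig = U * diagonal lam * Uᵀ) :
    ∃ Λ : SpectralData n, Λ.cov = Sig ∧ Λ.lam = lam := by
  have hU' : Uᵀ * U = 1 := mul_eq_one_comm.1 hU
  have hdiag : diagonal lam = Uᵀ * Sig * U := by
    rw [hdecomp, ← mul_assoc, ← mul_assoc, hU', one_mul, mul_assoc, hU', mul_one]
  refine ⟨⟨U, lam, (mem_orthogonalGroup_iff (Fin n) ℝ).2 hU, ?_, ?_⟩, hdecomp.symm, rfl⟩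
  · rw [← posSemidef_diagonal_iff, hdiag]
    exact hSig.conjTranspose_mul_mul_same U
  · rw [← trace_diagonal, hdiag, trace_mul_comm, ← mul_assoc, hU, one_mul, htr]

lemma transpose_mem_orthogonalGroup : Λ.Uᵀ ∈ Matrix.orthogonalGroup (Fin n) ℝ := by
  rw [mem_orthogonalGroup_iff, transpose_transpose]
  exact (mem_orthogonalGroup_iff' (Fin n) ℝ).1 Λ.mem_orthogonalGroup

lemma measurePreserving_rotate :
    MeasurePreserving (Λ.Uᵀ *ᵥ ·) (stdGaussian n) (stdGaussian n) :=
  measurePreserving_mulVec_stdGaussian Λ.transpose_mem_orthogonalGroup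

lemma abs_cov_le (i j : Fin n) : |Λ.cov i j| ≤ n := by
  have hU : ∀ i k, |Λ.U i k| ≤ 1 := fun i k =>
    entry_norm_bound_of_unitary (𝕜 := ℝ) Λ.mem_orthogonalGroup i k
  calc |Λ.cov i j| = |∑ k, Λ.U i k * Λ.lam k * Λ.U j k| := by
        rw [cov, mul_apply]
        simp only [mul_diagonal, transpose_apply]
    _ ≤ ∑ k, |Λ.U i k * Λ.lam k * Λ.U j k| := Finset.abs_sum_le_sum_abs _ _
    _ ≤ ∑ k, 1 * Λ.lam k * 1 := Finset.sum_le_sum fun k _ => by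
        have := Λ.lam_nonneg k
        rw [abs_mul, abs_mul, abs_of_nonneg this]
        gcongr <;> apply hU
    _ = n := by simp only [one_mul, mul_one, Λ.sum_lam]

lemma dSig_cov_nonneg (w v : Fin n → ℝ) : 0 ≤ dSig Λ.cov w v := by
  rw [cov, dSig_mul_mul_transpose, dSig_diagonal]
  exact Finset.sum_nonneg fun i _ => mul_nonneg (Λ.lam_nonneg i) (sq_nonneg _)

lemma goodPairs_cov (σ D : ℝ) :
    goodPairs Λ.cov σ D =
      Prod.map (Λ.Uᵀ *ᵥ ·) (Λ.Uᵀ *ᵥ ·) ⁻¹' goodPairs (diagonal Λ.lam) σ D := by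
  have hone : (1 : Matrix (Fin n) (Fin n) ℝ) = Λ.U * 1 * Λ.Uᵀ := by
    rw [mul_one]
    exact ((mem_orthogonalGroup_iff (Fin n) ℝ).1 Λ.mem_orthogonalGroup).symm
  ext p
  simp only [goodPairs, Set.mem_preimage, Set.mem_ofPred_eq, Prod.map_fst, Prod.map_snd]
  rw [hone, cov, dSig_mul_mul_transpose, dSig_mul_mul_transpose, ← hone, mulVec_smul]

lemma exists_gridScale_compl_coverable_le {R : ℝ} (hn : 0 < n) (hR : 0 < R) {K : ℕ} (hK : 0 < K)
    {δ : ℝ} (hδ : 0 < δ) (hKδ : 1 / (K * (2 * R * Real.log 2)) ≤ δ) :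
    ∃ k : Fin K, stdGaussian n (coverable (stdGaussian n)
        (goodPairs Λ.cov (gridScale K k) (DDrc Λ.lam R + 2 * δ))
        (Real.exp (-(n * (R * Real.log 2 + δ))) / 2))ᶜ ≤
      ENNReal.ofReal (coverConst (1 / (2 * R * Real.log 2)) δ / n) := by
  obtain ⟨k, hk⟩ :=
    exists_gridScale_compl_coverable_diagonal_le hn Λ.lam_nonneg Λ.sum_lam hR hK hδ hKδ
  have hgood := measurableSet_goodPairs (diagonal Λ.lam) (gridScale K k) (DDrc Λ.lam R + 2 * δ)
  refine ⟨k, ?_⟩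
  rwa [goodPairs_cov, coverable_preimage hgood _ Λ.measurePreserving_rotate, ← Set.preimage_compl,
    Λ.measurePreserving_rotate.measure_preimage
      (measurableSet_coverable hgood _).compl.nullMeasurableSet]

/-- The normalised distortion `(1/n) wᵀ Σ w` of reconstructing `w` by the zero word. -/
noncomputable def energy (w : Fin n → ℝ) : ℝ := 1 / n * dSig Λ.cov w 0

lemma energy_eq (w : Fin n → ℝ) :
    Λ.energy w = ∑ i, Λ.lam i / n * (Λ.Uᵀ *ᵥ w) i ^ 2 := by
  rw [energy, cov, dSig_mul_mul_transpose, dSig_diagonal, mulVec_zero, Finset.mul_sum]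
  exact Finset.sum_congr rfl fun i _ => by
    rw [Pi.zero_apply, sub_zero]
    ring

lemma memLp_energy : MemLp Λ.energy 2 (stdGaussian n) := by
  have hcoord (i : Fin n) : MemLp (fun w : Fin n → ℝ => w i ^ 2) 2 (stdGaussian n) := by
    have : MemLp (fun x : ℝ => x ^ 2) 2 (gaussianReal 0 1) :=
      (memLp_two_iff_integrable_sq (by fun_prop)).2
        (by simpa only [← pow_mul] using integrable_pow_gaussianReal _)
    exact this.comp_measurePreserving
      (measurePreserving_eval (fun _ : Fin n => gaussianReal 0 1) i)
  have hdiag := (memLp_finsetSum' Finset.univ fun i _ =>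
    (hcoord i).const_mul (Λ.lam i / n)).comp_measurePreserving Λ.measurePreserving_rotate
  convert hdiag using 1
  ext w
  simp only [Λ.energy_eq, Function.comp_apply, Finset.sum_apply]

lemma integral_sq_energy_le (hn : 0 < n) :
    ∫ w, Λ.energy w ^ 2 ∂stdGaussian n ≤ gaussianFourthMoment := by
  have hn' : (n : ℝ) ≠ 0 := by exact_mod_cast hn.ne'
  have hweights : ∑ i, Λ.lam i / n = 1 := by rw [← Finset.sum_div, Λ.sum_lam, div_self hn']
  have hjensen : ∀ w, Λ.energy w ^ 2 ≤ ∑ i, Λ.lam i / n * (Λ.Uᵀ *ᵥ w) i ^ 4 := fun w => by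
    rw [energy_eq]
    refine (Real.pow_arith_mean_le_arith_mean_pow Finset.univ _ _
      (fun i _ => div_nonneg (Λ.lam_nonneg i) n.cast_nonneg) hweights
      (fun i _ => sq_nonneg _) 2).trans_eq ?_
    simp only [← pow_mul]
  have hterm (i : Fin n) :
      Integrable (fun w : Fin n → ℝ => Λ.lam i / n * w i ^ 4) (stdGaussian n) :=
    (integrable_comp_eval (μ := fun _ : Fin n => gaussianReal 0 1)
      (integrable_pow_gaussianReal 4)).const_mul _
  have hsum := integrable_finsetSum Finset.univ fun i _ => hterm i
  calc ∫ w, Λ.energy w ^ 2 ∂stdGaussian n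
      ≤ ∫ w, ∑ i, Λ.lam i / n * (Λ.Uᵀ *ᵥ w) i ^ 4 ∂stdGaussian n :=
        integral_mono Λ.memLp_energy.integrable_sq
          (Λ.measurePreserving_rotate.integrable_comp_of_integrable hsum) hjensen
    _ = ∫ w, ∑ i, Λ.lam i / n * w i ^ 4 ∂stdGaussian n := by
        have hrot := Λ.measurePreserving_rotate
        conv_rhs => rw [← hrot.map_eq]
        exact (integral_map hrot.measurable.aemeasurable
          (hrot.map_eq ▸ hsum.aestronglyMeasurable)).symm
    _ = ∑ i, Λ.lam i / n * gaussianFourthMoment := by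
        rw [integral_finsetSum _ fun i _ => hterm i]
        refine Finset.sum_congr rfl fun i _ => ?_
        rw [integral_const_mul, gaussianFourthMoment]
        congr 1
        exact integral_comp_eval (μ := fun _ : Fin n => gaussianReal 0 1)
          (integrable_pow_gaussianReal 4).aestronglyMeasurable
    _ = gaussianFourthMoment := by rw [← Finset.sum_mul, hweights, one_mul]

end SpectralData

section Codebook

variable {n : ℕ} {R δ : ℝ}

lemma dSig_le_of_mem_goodPairs {A B : Matrix (Fin n) (Fin n) ℝ} {e σ D : ℝ} (he : 0 ≤ e)
    (h : ∀ i j, |A i j - B i j| ≤ e) {w x : Fin n → ℝ} (hwx : (w, x) ∈ goodPairs B σ D) :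
    dSig A w (σ • x) ≤ n * (D + 3 * n * e) := by
  have herr : (w - σ • x) ⬝ᵥ (w - σ • x) ≤ 3 * n := by
    simpa only [dSig, one_mulVec] using hwx.2
  calc dSig A w (σ • x) ≤ dSig B w (σ • x) + e * (n * ((w - σ • x) ⬝ᵥ (w - σ • x))) := by
        simpa only [dSig, Fintype.card_fin] using dotProduct_mulVec_le_of_abs_sub_le h (w - σ • x)
    _ ≤ n * D + e * (n * (3 * n)) := by
        gcongr
        exact hwx.1
    _ = n * (D + 3 * n * e) := by ring

lemma SpectralData.exists_finite_net (hn : 0 < n) (hR : 0 < R) {e : ℝ} (he : 0 < e) (hδ : 0 < δ) :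
    ∃ s : Set (SpectralData n), s.Finite ∧ s.ncard ≤ (⌊2 * n / e⌋₊ + 1) ^ (n * n) ∧
      ∀ Λ : SpectralData n, ∃ Λ' ∈ s, (∀ i j, |Λ.cov i j - Λ'.cov i j| ≤ e) ∧
        DDrc Λ'.lam R ≤ DDrc Λ.lam R + δ := by
  obtain ⟨q, hq⟩ := exists_uniform_quantizer
    (F := fun (Λ : SpectralData n) (ij : Fin n × Fin n) => Λ.cov ij.1 ij.2)
    (fun Λ ij => Λ.abs_cov_le ij.1 ij.2) he
  have hbdd : BddBelow (Set.range fun Λ : SpectralData n => DDrc Λ.lam R) :=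
    ⟨0, Set.forall_mem_range.2 fun Λ => DDrc_nonneg hn Λ.lam_nonneg Λ.sum_lam hR⟩
  obtain ⟨rep, hrep⟩ := exists_almost_minimal_representative q hbdd hδ
  refine ⟨Set.range rep, Set.finite_range rep, ?_, fun Λ => ⟨_, ⟨_, rfl⟩, fun i j => ?_,
    (hrep Λ).2⟩⟩
  · calc (Set.range rep).ncard ≤ Nat.card (Set.range q) := Finite.card_range_le rep
      _ ≤ Nat.card (Fin n × Fin n → Fin (⌊2 * n / e⌋₊ + 1)) := Finite.card_subtype_le _
      _ = (⌊2 * n / e⌋₊ + 1) ^ (n * n) := by simp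
  · exact hq _ _ (hrep Λ).1.symm (i, j)

/-- The source words for which even the best of the reconstructions `σ C j` has normalised
distortion exceeding `D`. -/
def missed (Sig : Matrix (Fin n) (Fin n) ℝ) (σ D : ℝ) {M : ℕ} (C : Fin M → Fin n → ℝ) :
    Set (Fin n → ℝ) :=
  {w | ∀ j, D < 1 / n * dSig Sig w (σ • C j)}

lemma measurableSet_missed (Sig : Matrix (Fin n) (Fin n) ℝ) (σ D : ℝ) {M : ℕ}
    (C : Fin M → Fin n → ℝ) : MeasurableSet (missed Sig σ D C) := by
  rw [missed, Set.ofPred_forall]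
  refine MeasurableSet.iInter fun j => measurableSet_lt measurable_const ?_
  exact ((measurable_dSig_smul Sig σ).comp (measurable_id.prodMk measurable_const)).const_mul _

lemma missed_subset (hn : 0 < n) {A B : Matrix (Fin n) (Fin n) ℝ} {e σ D D' : ℝ} (he : 0 ≤ e)
    (h : ∀ i j, |A i j - B i j| ≤ e) (hD : D + 3 * n * e ≤ D') {M : ℕ} (C : Fin M → Fin n → ℝ) :
    missed A σ D' C ⊆ {w | ∀ j, (w, C j) ∉ goodPairs B σ D} := by
  refine fun w hw j hj => (hw j).not_ge ?_
  rw [one_div, inv_mul_le_iff₀ (Nat.cast_pos.2 hn)]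
  exact (dSig_le_of_mem_goodPairs he h hj).trans (by gcongr)

lemma exists_codebook_measure_missed_le (hn : 0 < n) (hR : 0 < R) (hδ : 0 < δ) {K : ℕ}
    (hK : 0 < K) (hKδ : 1 / (K * (2 * R * Real.log 2)) ≤ δ) (M : ℕ) :
    ∃ C : Fin M → Fin n → ℝ, ∀ Λ : SpectralData n, ∃ k : Fin K,
      (stdGaussian n).real (missed Λ.cov (gridScale K k) (DDrc Λ.lam R + 4 * δ) C) ≤
        coverConst (1 / (2 * R * Real.log 2)) δ / n + (⌊6 * n ^ 2 / δ⌋₊ + 1) ^ (n * n) *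
          Real.exp (-(M * (Real.exp (-(n * (R * Real.log 2 + δ))) / 2))) := by
  set p := Real.exp (-(n * (R * Real.log 2 + δ))) / 2
  set A := coverConst (1 / (2 * R * Real.log 2)) δ
  have : (0 : ℝ) < n := by exact_mod_cast hn
  have he : 0 < δ / (3 * n) := by positivity
  have hA : 0 ≤ A / n := div_nonneg (coverConst_nonneg _ _) n.cast_nonneg
  obtain ⟨net, hfin, hcard, hnet⟩ := SpectralData.exists_finite_net hn hR he hδ
  choose k hk using fun Λ : SpectralData n => Λ.exists_gridScale_compl_coverable_le hn hR hK hδ hKδ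
  let good (Λ : SpectralData n) := goodPairs Λ.cov (gridScale K (k Λ)) (DDrc Λ.lam R + 2 * δ)
  have : Finite net := hfin
  obtain ⟨C, hC⟩ := exists_code_forall_measure_missed_le (stdGaussian n) (stdGaussian n)
    (S := fun Λ : net => good Λ) (fun Λ => measurableSet_goodPairs _ _ _) p M
  refine ⟨C, fun Λ => ?_⟩
  obtain ⟨Λ', hΛ', hcov, hDD⟩ := hnet Λ
  have hexcess : DDrc Λ'.lam R + 2 * δ + 3 * n * (δ / (3 * n)) ≤ DDrc Λ.lam R + 4 * δ := by
    rw [mul_div_cancel₀ δ (by positivity : (3 * n : ℝ) ≠ 0)]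
    linarith
  have hsubset : missed Λ.cov (gridScale K (k Λ')) (DDrc Λ.lam R + 4 * δ) C ⊆
      (coverable (stdGaussian n) (good Λ') p)ᶜ ∪
        {w | w ∈ coverable (stdGaussian n) (good Λ') p ∧ ∀ j, (w, C j) ∉ good Λ'} := by
    have hmissed := missed_subset (σ := gridScale K (k Λ')) hn he.le hcov hexcess C
    exact fun w hw => or_iff_not_imp_left.2 fun hcover => ⟨not_not.1 hcover, hmissed hw⟩
  have hcard' : (Nat.card net : ℝ) ≤ (⌊6 * n ^ 2 / δ⌋₊ + 1) ^ (n * n) := by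
    rw [show (6 * n ^ 2 / δ : ℝ) = 2 * n / (δ / (3 * n)) by field_simp; norm_num]
    exact_mod_cast hcard
  refine ⟨k Λ', ENNReal.toReal_le_of_le_ofReal (add_nonneg hA (by positivity)) ?_⟩
  rw [ENNReal.ofReal_add hA (by positivity)]
  exact (measure_mono hsubset).trans ((measure_union_le _ _).trans
    (add_le_add (hk Λ') ((hC ⟨Λ', hΛ'⟩).trans (ENNReal.ofReal_le_ofReal (by gcongr)))))

end Codebook

section Asymptotics

open Filter Topology

variable {R ε δ : ℝ}

lemma floor_add_one_pow_le_exp {x : ℝ} (hx : 0 ≤ x) (m : ℕ) :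
    ((⌊x⌋₊ + 1) ^ m : ℝ) ≤ Real.exp (m * x) := by
  rw [Real.exp_nat_mul]
  gcongr
  linarith [Nat.floor_le hx, Real.add_one_le_exp x]

lemma half_le_floor {x : ℝ} (hx : 1 ≤ x) : x / 2 ≤ ⌊x⌋₊ := by
  have h1 : (1 : ℝ) ≤ ⌊x⌋₊ := by exact_mod_cast Nat.floor_pos.2 hx
  linarith [Nat.lt_floor_add_one x]

lemma exp_div_four_le_floor_two_rpow_mul (hR : 0 ≤ R) (hε : 0 ≤ ε) (hδ : δ ≤ ε / 4 * Real.log 2)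
    (n : ℕ) :
    Real.exp (ε / 4 * Real.log 2 * n) / 4 ≤
      ⌊(2 : ℝ) ^ (n * (R + ε / 2))⌋₊ * (Real.exp (-(n * (R * Real.log 2 + δ))) / 2) := by
  calc Real.exp (ε / 4 * Real.log 2 * n) / 4
      ≤ Real.exp (Real.log 2 * (n * (R + ε / 2)) + -(n * (R * Real.log 2 + δ))) / 4 := by
        gcongr
        linarith [mul_le_mul_of_nonneg_left hδ n.cast_nonneg]
    _ = (2 : ℝ) ^ (n * (R + ε / 2)) / 2 * (Real.exp (-(n * (R * Real.log 2 + δ))) / 2) := by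
        rw [Real.exp_add, ← Real.rpow_def_of_pos zero_lt_two]
        ring
    _ ≤ ⌊(2 : ℝ) ^ (n * (R + ε / 2))⌋₊ * (Real.exp (-(n * (R * Real.log 2 + δ))) / 2) := by
        gcongr
        exact half_le_floor (Real.one_le_rpow one_le_two (by positivity))

lemma tendsto_mul_pow_sub_exp_atBot (a : ℝ) (k : ℕ) {b c : ℝ} (hb : 0 < b) (hc : 0 < c) :
    Tendsto (fun x : ℝ => a * x ^ k - Real.exp (b * x) / c) atTop atBot := by
  have hexp : Tendsto (fun x : ℝ => Real.exp (b * x)) atTop atTop :=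
    Real.tendsto_exp_atTop.comp (tendsto_id.const_mul_atTop hb)
  have hpow : Tendsto (fun x : ℝ => a * (x ^ (k : ℝ) * Real.exp (-b * x)) - 1 / c) atTop
      (𝓝 (a * 0 - 1 / c)) :=
    ((tendsto_rpow_mul_exp_neg_mul_atTop_nhds_zero k b hb).const_mul a).sub_const _
  refine (hexp.atTop_mul_neg (by simpa using hc) hpow).congr fun x => ?_
  rw [Real.rpow_natCast, neg_mul, Real.exp_neg]
  field_simp

lemma tendsto_miss_bound (A : ℝ) (hR : 0 ≤ R) (hε : 0 < ε) (hδ : 0 < δ)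
    (hδε : δ ≤ ε / 4 * Real.log 2) :
    Tendsto (fun n : ℕ => A / n + (⌊6 * (n : ℝ) ^ 2 / δ⌋₊ + 1) ^ (n * n) *
      Real.exp (-(⌊(2 : ℝ) ^ (n * (R + ε / 2))⌋₊ *
        (Real.exp (-(n * (R * Real.log 2 + δ))) / 2)))) atTop (𝓝 0) := by
  have hunion : Tendsto (fun n : ℕ =>
      Real.exp (6 / δ * (n : ℝ) ^ 4 - Real.exp (ε / 4 * Real.log 2 * n) / 4)) atTop (𝓝 0) :=
    Real.tendsto_exp_atBot.comp ((tendsto_mul_pow_sub_exp_atBot (6 / δ) 4 (by positivity)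
      four_pos).comp tendsto_natCast_atTop_atTop)
  rw [← add_zero (0 : ℝ)]
  refine (tendsto_const_div_atTop_nhds_zero_nat A).add
    (squeeze_zero (fun n => by positivity) (fun n => ?_) hunion)
  rw [sub_eq_add_neg, Real.exp_add]
  gcongr
  · refine (floor_add_one_pow_le_exp (by positivity) _).trans_eq ?_
    push_cast
    ring_nf
  · exact exp_div_four_le_floor_two_rpow_mul hR hε.le hδε n

lemma eventually_mul_floor_add_one_le_floor (K : ℕ) (hR : 0 ≤ R) (hε : 0 < ε) :
    ∀ᶠ n : ℕ in atTop,
      K * ⌊(2 : ℝ) ^ (n * (R + ε / 2))⌋₊ + 1 ≤ ⌊(2 : ℝ) ^ (n * (R + ε))⌋₊ := by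
  have htendsto : Tendsto (fun n : ℕ => (2 : ℝ) ^ (n * (ε / 2))) atTop atTop :=
    (tendsto_rpow_atTop_of_base_gt_one 2 one_lt_two).comp
      (tendsto_natCast_atTop_atTop.atTop_mul_const (by positivity))
  filter_upwards [htendsto.eventually_ge_atTop (K + 1 : ℝ)] with n hn
  set X := (2 : ℝ) ^ (n * (R + ε / 2)) with hX
  have hX1 : 1 ≤ X := Real.one_le_rpow one_le_two (by positivity)
  refine Nat.le_floor ?_
  push_cast
  calc (K * ⌊X⌋₊ + 1 : ℝ) ≤ K * X + X := by
        gcongr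
        exact Nat.floor_le (zero_le_one.trans hX1)
    _ = (K + 1) * X := by ring
    _ ≤ (2 : ℝ) ^ (n * (ε / 2)) * X := by gcongr
    _ = (2 : ℝ) ^ (n * (R + ε)) := by
        rw [hX, ← Real.rpow_add zero_lt_two]
        ring_nf

end Asymptotics

section UniversalCode

open Filter

variable {R ε δ η : ℝ}

lemma exists_fin_range_subset_range {ι β : Type*} [Finite ι] [Nonempty β] (F : ι → β) {Q : ℕ}
    (hQ : Nat.card ι ≤ Q) : ∃ g : Fin Q → β, Set.range F ⊆ Set.range g := by
  cases nonempty_fintype ι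
  obtain ⟨e⟩ := Function.Embedding.nonempty_of_card_le (α := ι) (β := Fin Q)
    (by simpa using hQ)
  obtain ⟨b⟩ := ‹Nonempty β›
  refine ⟨Function.extend e F fun _ => b, ?_⟩
  rintro _ ⟨i, rfl⟩
  exact ⟨e i, e.injective.extend_apply _ _ i⟩

lemma exists_codebook_integral_iInf_dSig_le {n : ℕ} (hn : 0 < n) (hR : 0 < R) (hδ : 0 < δ) {K : ℕ}
    (hK : 0 < K) (hKδ : 1 / (K * (2 * R * Real.log 2)) ≤ δ) {M Q : ℕ} (hQ : K * M + 1 ≤ Q) {c : ℝ}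
    (hc : 0 < c) (hcδ : gaussianFourthMoment / (2 * c) ≤ δ)
    (hmiss : c / 2 * (coverConst (1 / (2 * R * Real.log 2)) δ / n +
      (⌊6 * n ^ 2 / δ⌋₊ + 1) ^ (n * n) *
        Real.exp (-(M * (Real.exp (-(n * (R * Real.log 2 + δ))) / 2)))) ≤ δ) :
    ∃ g : Fin Q → Fin n → ℝ, ∀ Λ : SpectralData n,
      1 / n * ∫ w, ⨅ q, dSig Λ.cov w (g q) ∂stdGaussian n ≤ DDrc Λ.lam R + 6 * δ := by
  obtain ⟨C, hC⟩ := exists_codebook_measure_missed_le hn hR hδ hK hKδ M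
  obtain ⟨g, hg⟩ := exists_fin_range_subset_range (Q := Q)
    (fun o : Option (Fin K × Fin M) => o.elim 0 fun kj => gridScale K kj.1 • C kj.2)
    (by simpa using hQ)
  refine ⟨g, fun Λ => ?_⟩
  obtain ⟨k, hk⟩ := hC Λ
  obtain ⟨q₀, hq₀⟩ := hg ⟨none, rfl⟩
  have : Nonempty (Fin Q) := ⟨q₀⟩
  have hmin (w : Fin n → ℝ) (q : Fin Q) :
      1 / n * ⨅ q, dSig Λ.cov w (g q) ≤ 1 / n * dSig Λ.cov w (g q) := by
    gcongr
    exact ciInf_le ⟨0, Set.forall_mem_range.2 fun _ => Λ.dSig_cov_nonneg _ _⟩ q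
  have hhit (w) (hw : w ∉ missed Λ.cov (gridScale K k) (DDrc Λ.lam R + 4 * δ) C) :
      1 / n * ⨅ q, dSig Λ.cov w (g q) ≤ DDrc Λ.lam R + 4 * δ := by
    simp only [missed, Set.mem_ofPred_eq, not_forall, not_lt] at hw
    obtain ⟨j, hj⟩ := hw
    obtain ⟨q, hq⟩ := hg ⟨some (k, j), rfl⟩
    exact (hmin w q).trans (hq ▸ hj)
  have hDD := DDrc_nonneg hn Λ.lam_nonneg Λ.sum_lam hR
  calc 1 / n * ∫ w, ⨅ q, dSig Λ.cov w (g q) ∂stdGaussian n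
      = ∫ w, 1 / n * ⨅ q, dSig Λ.cov w (g q) ∂stdGaussian n := (integral_const_mul _ _).symm
    _ ≤ DDrc Λ.lam R + 4 * δ + c / 2 * (stdGaussian n).real
          (missed Λ.cov (gridScale K k) (DDrc Λ.lam R + 4 * δ) C) +
          (∫ w, Λ.energy w ^ 2 ∂stdGaussian n) / (2 * c) :=
        integral_le_of_le_off
          (fun w => mul_nonneg (by positivity) (Real.iInf_nonneg fun _ => Λ.dSig_cov_nonneg _ _))
          (fun w => (hmin w q₀).trans_eq (by rw [hq₀]; rfl))
          Λ.memLp_energy (measurableSet_missed _ _ _ _) (by positivity) hhit hc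
    _ ≤ DDrc Λ.lam R + 4 * δ + δ + δ := by
        gcongr
        · exact le_trans (by gcongr) hmiss
        · exact le_trans (by gcongr; exact Λ.integral_sq_energy_le hn) hcδ
    _ = DDrc Λ.lam R + 6 * δ := by ring

lemma eventually_exists_codebook (hR : 0 < R) (hε : 0 < ε) (hη : 0 < η) :
    ∀ᶠ n : ℕ in atTop, ∃ g : Fin ⌊(2 : ℝ) ^ (n * (R + ε))⌋₊ → Fin n → ℝ,
      ∀ Λ : SpectralData n,
        1 / n * ∫ w, ⨅ q, dSig Λ.cov w (g q) ∂stdGaussian n ≤ DDrc Λ.lam R + η := by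
  have hm4 := gaussianFourthMoment_nonneg
  obtain ⟨δ, hδ, hδη, hδε⟩ : ∃ δ, 0 < δ ∧ 6 * δ ≤ η ∧ δ ≤ ε / 4 * Real.log 2 :=
    ⟨min (η / 6) (ε / 4 * Real.log 2), lt_min (by positivity) (by positivity),
      by linarith [min_le_left (η / 6) (ε / 4 * Real.log 2)], min_le_right _ _⟩
  obtain ⟨K, hKδ⟩ := exists_nat_gt (1 / (δ * (2 * R * Real.log 2)))
  obtain ⟨c, hcδ⟩ := exists_gt (gaussianFourthMoment / (2 * δ))
  have hK : (0 : ℝ) < K := lt_trans (by positivity) hKδ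
  have hc : 0 < c := lt_of_le_of_lt (by positivity) hcδ
  rw [div_lt_iff₀ (by positivity)] at hKδ hcδ
  have hmiss := (tendsto_miss_bound (coverConst (1 / (2 * R * Real.log 2)) δ)
    hR.le hε hδ hδε).const_mul (c / 2)
  rw [mul_zero] at hmiss
  filter_upwards [hmiss.eventually_le_const hδ, eventually_mul_floor_add_one_le_floor K hR.le hε,
    eventually_gt_atTop 0] with n hmiss hQ hn
  obtain ⟨g, hg⟩ := exists_codebook_integral_iInf_dSig_le hn hR hδ (by exact_mod_cast hK)
    ((div_le_iff₀ (by positivity)).2 (by linarith)) hQ hc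
    ((div_le_iff₀ (by positivity)).2 (by linarith)) hmiss
  exact ⟨g, fun Λ => (hg Λ).trans (by gcongr)⟩

end UniversalCode

end

theorem stmt_2_general (Rstar ε η : ℝ) (hRstar : 0 < Rstar) (hε : 0 < ε) (hη : 0 < η) :
    ∃ n₀ : ℕ, ∀ n : ℕ, n₀ ≤ n →
      ∃ (f : (Fin n → ℝ) → Matrix (Fin n) (Fin n) ℝ → Fin ⌊(2 : ℝ) ^ ((n : ℝ) * (Rstar + ε))⌋₊)
        (g : Fin ⌊(2 : ℝ) ^ ((n : ℝ) * (Rstar + ε))⌋₊ → Fin n → ℝ),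
        ∀ Sig : Matrix (Fin n) (Fin n) ℝ, Sig.PosSemidef → Sig.trace = (n : ℝ) →
        ∀ U : Matrix (Fin n) (Fin n) ℝ, U * Uᵀ = 1 →
        ∀ lam : Fin n → ℝ, Sig = U * Matrix.diagonal lam * Uᵀ →
          (1 / (n : ℝ)) * ∫ w, dSig Sig w (g (f w Sig)) ∂(stdGaussian n) ≤ DDrc lam Rstar + η := by
  obtain ⟨n₀, hn₀⟩ := Filter.eventually_atTop.1 (eventually_exists_codebook hRstar hε hη)
  refine ⟨n₀, fun n hn => ?_⟩
  obtain ⟨g, hg⟩ := hn₀ n hn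
  have : NeZero ⌊(2 : ℝ) ^ ((n : ℝ) * (Rstar + ε))⌋₊ :=
    ⟨(Nat.floor_pos.2 (Real.one_le_rpow one_le_two (by positivity))).ne'⟩
  choose f hf using fun (w : Fin n → ℝ) (Sig : Matrix (Fin n) (Fin n) ℝ) =>
    exists_eq_ciInf_of_finite (f := fun q => dSig Sig w (g q))
  refine ⟨f, g, fun Sig hSig htr U hU lam hdecomp => ?_⟩
  obtain ⟨Λ, rfl, rfl⟩ := SpectralData.exists_of_posSemidef hSig htr hU hdecomp
  simpa only [hf] using hg Λ

/-- existence of a universal quantization scheme which, with probability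
`≥ 1 - exp(-n^B)` over the shared randomness `S`, is simultaneously good for
all PSD `Σ` with trace `n`. -/
theorem stmt_2 (Rstar ε η B : ℝ) (hRstar : 0 < Rstar) (hε : 0 < ε) (hη : 0 < η) (hB : 0 < B) :
    ∃ n₀ : ℕ, ∀ n : ℕ, n₀ ≤ n →
      ∃ (R : ℝ) (f : (Fin n → ℝ) → Matrix (Fin n) (Fin n) ℝ → ℝ →
            Fin ⌊(2 : ℝ) ^ ((n : ℝ) * R)⌋₊)
        (g : Fin ⌊(2 : ℝ) ^ ((n : ℝ) * R)⌋₊ → ℝ → (Fin n → ℝ)),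
        R ≤ Rstar + ε ∧
        1 - Real.exp (-(n : ℝ) ^ B) ≤
          ((volume.restrict (Set.Icc (0 : ℝ) 1))
            {s : ℝ |
              ∀ (Sig : Matrix (Fin n) (Fin n) ℝ), Sig.PosSemidef → Sig.trace = (n : ℝ) →
              ∀ (U : Matrix (Fin n) (Fin n) ℝ), U * Uᵀ = 1 →
              ∀ lam : Fin n → ℝ, Sig = U * Matrix.diagonal lam * Uᵀ →
                (1 / (n : ℝ)) * ∫ w, dSig Sig w (g (f w Sig s) s) ∂(stdGaussian n)
                  ≤ DDrc lam Rstar + η}).toReal := by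
  obtain ⟨n₀, hn₀⟩ := stmt_2_general Rstar ε η hRstar hε hη
  refine ⟨n₀, fun n hn => ?_⟩
  obtain ⟨f, g, hfg⟩ := hn₀ n hn
  refine ⟨Rstar + ε, fun w Sig _ => f w Sig, fun q _ => g q, le_rfl, ?_⟩
  rw [Set.eq_univ_of_forall (s := {s : ℝ | _}) fun _ => hfg, Measure.restrict_apply_univ,
    Real.volume_Icc, sub_zero, ENNReal.ofReal_one, ENNReal.toReal_one]
  exact sub_le_self _ (Real.exp_nonneg _)
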